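/- arXiv:1110.0255 — 5 statements merged into one kernel-verified Lean document; each statement's English description precedes it below -/
import Mathlib

section
/- Let K be a number field and S : Emb(K) → ℤ. Then the following are equivalent: (i) the character θ^S is balanced, i.e. for every complex conjugation c′ (an automorphism of ℂ of the form g⁻¹∘c∘g with c the standard complex conjugation and g a field automorphism of ℂ) there is an integer a such that S(c′∘σ) + S(σ) = a for every σ ∈ Emb(K); (ii) for every unit u of the ring of integers 𝓞_K, the complex number θ^S(u) = ∏_{σ ∈ Emb(K)} σ(u)^{S(σ)} is a root of unity (there exists m ≥ 1 with θ^S(u)^m = 1). -/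
open NumberField

/-- A *complex conjugation* is an automorphism of `ℂ` of the form `g⁻¹ ∘ c ∘ g`
where `c` is the standard complex conjugation and `g` is any field automorphism of `ℂ`. -/
noncomputable def complexConjugation (g : ℂ ≃+* ℂ) : ℂ ≃+* ℂ :=
  g.trans ((starRingAut : ℂ ≃+* ℂ).trans g.symm)

/-!
The Galois action satisfies `g (θ^S x) = θ^(S ∘ g⁻¹) x`, and `S` is balanced at the conjugation
`g⁻¹ ∘ c ∘ g` iff `S ∘ g⁻¹` is balanced at `c`. By Kronecker's theorem the algebraic integer
`θ^S(u)` is a root of unity iff `|g (θ^S u)| = 1` for all automorphisms `g` of `ℂ`, so it suffices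
to show that `S` is balanced at `c` iff `|θ^S u| = 1` for all units `u`. Now
`2 log |θ^S u| = ∑ σ, (S (c ∘ σ) + S σ) log |σ u|`, and by Dirichlet's unit theorem the only linear
relation between the numbers `log |u|_w` valid for all units is the product formula.
-/

open NumberField.InfinitePlace NumberField.Units NumberField.Units.dirichletUnitTheorem
open NumberField.ComplexEmbedding (conjugate)

section Kronecker

theorem exists_ringEquiv_comp_algebraMap_eq {R K L ι : Type*} [CommRing R] [Field K] [Field L]
    [Algebra R K] [Algebra R L] [IsAlgClosed K] [IsAlgClosed L] {v : ι → K} {w : ι → L}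
    (hv : IsTranscendenceBasis R v) (hw : IsTranscendenceBasis R w) :
    ∃ g : K ≃+* L, (g : K →+* L).comp (algebraMap R K) = algebraMap R L := by
  let := IsAlgClosed.isAlgClosure_of_transcendence_basis v hv
  let := IsAlgClosed.isAlgClosure_of_transcendence_basis w hw
  let e : Algebra.adjoin R (Set.range v) ≃ₐ[R] Algebra.adjoin R (Set.range w) :=
    hv.1.aevalEquiv.symm.trans hw.1.aevalEquiv
  refine ⟨IsAlgClosure.equivOfEquiv K L e.toRingEquiv, RingHom.ext fun r ↦ ?_⟩
  rw [RingHom.comp_apply, RingHom.coe_coe,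
    IsScalarTower.algebraMap_apply R (Algebra.adjoin R (Set.range v)) K,
    IsAlgClosure.equivOfEquiv_algebraMap, AlgEquiv.coe_ringEquiv, e.commutes,
    ← IsScalarTower.algebraMap_apply]

theorem exists_algEquiv_comp_eq {k F K : Type*} [Field k] [Field F] [Field K] [Algebra k F]
    [Algebra k K] [Algebra.IsAlgebraic k F] [IsAlgClosed K] (i j : F →ₐ[k] K) :
    ∃ g : K ≃ₐ[k] K, (g : K →ₐ[k] K).comp i = j := by
  obtain ⟨s, hs⟩ := exists_isTranscendenceBasis k K
  -- `s` remains a transcendence basis over `F`, whichever way `F` is embedded into `K`.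
  have basis_over (f : F →ₐ[k] K) :
      letI := f.toAlgebra
      IsTranscendenceBasis F ((↑) : s → K) :=
    letI := f.toAlgebra
    have : IsScalarTower k F K := .of_algebraMap_eq fun x ↦ (f.commutes x).symm
    (Algebra.IsAlgebraic.isTranscendenceBasis_iff k F).1 hs
  obtain ⟨g, hg⟩ := @exists_ringEquiv_comp_algebraMap_eq F K K s _ _ _ i.toAlgebra j.toAlgebra _ _
    _ _ (basis_over i) (basis_over j)
  have g_apply (x : F) : g (i x) = j x := DFunLike.congr_fun hg x
  have g_commutes (x : k) : g (algebraMap k K x) = algebraMap k K x := by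
    simpa only [AlgHom.commutes] using g_apply (algebraMap k F x)
  exact ⟨.ofRingEquiv g_commutes, AlgHom.ext g_apply⟩

theorem isOfFinOrder_iff_forall_norm_ringEquiv_eq_one {z : ℂ} (hz : IsIntegral ℤ z) :
    IsOfFinOrder z ↔ ∀ g : ℂ ≃+* ℂ, ‖g z‖ = 1 := by
  refine ⟨fun h g ↦ ((g : ℂ →* ℂ).isOfFinOrder h).norm_eq_one, fun h ↦ ?_⟩
  let F := IntermediateField.adjoin ℚ {z}
  have : FiniteDimensional ℚ F := IntermediateField.adjoin.finiteDimensional hz.tower_top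
  have : NumberField F := ⟨⟩
  let x : F := IntermediateField.AdjoinSimple.gen ℚ z
  have hx : IsIntegral ℤ x := (isIntegral_algebraMap_iff (algebraMap F ℂ).injective).1 hz
  have norm_conjugates (φ : F →+* ℂ) : ‖φ x‖ = 1 := by
    obtain ⟨g, hg⟩ := exists_algEquiv_comp_eq F.val φ.toRatAlgHom
    have hgx : g z = φ x := DFunLike.congr_fun hg x
    exact hgx ▸ h g
  obtain ⟨n, hn, hxn⟩ := Embeddings.pow_eq_one_of_norm_eq_one F ℂ hx norm_conjugates
  exact (algebraMap F ℂ : F →* ℂ).isOfFinOrder (isOfFinOrder_iff_pow_eq_one.2 ⟨n, hn, hxn⟩)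

end Kronecker

section Dirichlet

variable {K : Type*} [Field K] [NumberField K]

theorem sum_embeddings_comp_mk {M : Type*} [AddCommMonoid M] (f : InfinitePlace K → M) :
    ∑ σ : K →+* ℂ, f (mk σ) = ∑ w : InfinitePlace K, mult w • f w := by
  classical
  rw [← Finset.sum_fiberwise (s := Finset.univ) (g := mk)]
  refine Finset.sum_congr rfl fun w _ ↦ ?_
  rw [Finset.sum_congr rfl fun σ hσ ↦ by rw [(Finset.mem_filter.1 hσ).2], Finset.sum_const,
    card_filter_mk_eq]

theorem forall_units_sum_mult_mul_log_eq_zero_iff {t : InfinitePlace K → ℝ} :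
    (∀ u : (𝓞 K)ˣ, ∑ w, t w * (mult w * Real.log (w (u : K))) = 0) ↔ ∃ a, ∀ w, t w = a := by
  classical
  constructor
  · intro h
    -- Subtracting `t w₀` times the product formula removes the `w₀`-coordinate, which the
    -- logarithmic space omits.
    let f : logSpace K →ₗ[ℝ] ℝ := Fintype.linearCombination ℝ fun w ↦ t w - t w₀
    have hf_units (u : (𝓞 K)ˣ) : f (logEmbedding K (Additive.ofMul u)) = 0 :=
      calc f (logEmbedding K (Additive.ofMul u))
        _ = ∑ w, (t w - t w₀) * (mult w * Real.log (w (u : K))) := by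
          rw [Fintype.sum_eq_add_sum_subtype_ne _ w₀, sub_self, zero_mul, zero_add]
          simp only [f, Fintype.linearCombination_apply, logEmbedding_component, smul_eq_mul,
            mul_comm]
        _ = 0 := by
          simp only [sub_mul, Finset.sum_sub_distrib, ← Finset.mul_sum, h u, sum_mult_mul_log,
            mul_zero, sub_zero]
    have hf : f = 0 := LinearMap.ext_on (unitLattice_span_eq_top K) <| by
      rintro _ ⟨u, -, rfl⟩
      exact hf_units u.toMul
    refine ⟨t w₀, fun w ↦ ?_⟩
    by_cases hw : w = w₀
    · rw [hw]
    · have := DFunLike.congr_fun hf (Pi.single ⟨w, hw⟩ 1)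
      rwa [Fintype.linearCombination_apply_single, one_smul, LinearMap.zero_apply,
        sub_eq_zero] at this
  · rintro ⟨a, ha⟩ u
    simp only [ha, ← Finset.mul_sum, sum_mult_mul_log, mul_zero]

theorem forall_units_sum_mul_log_norm_eq_zero_iff {t : (K →+* ℂ) → ℝ}
    (ht : ∀ σ, t (conjugate σ) = t σ) :
    (∀ u : (𝓞 K)ˣ, ∑ σ, t σ * Real.log ‖σ (u : K)‖ = 0) ↔ ∃ a, ∀ σ, t σ = a := by
  let T : InfinitePlace K → ℝ := fun w ↦ t w.embedding
  have ht_mk (σ : K →+* ℂ) : t σ = T (mk σ) := by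
    rcases embedding_mk_eq σ with h | h <;> simp only [T, h, ht]
  have sum_eq (u : (𝓞 K)ˣ) : ∑ σ, t σ * Real.log ‖σ (u : K)‖ =
      ∑ w, T w * (mult w * Real.log (w (u : K))) := by
    simpa only [ht_mk, apply, nsmul_eq_mul, mul_left_comm] using
      sum_embeddings_comp_mk fun w ↦ T w * Real.log (w (u : K))
  have mk_surjective : Function.Surjective (mk : (K →+* ℂ) → InfinitePlace K) :=
    fun w ↦ ⟨w.embedding, mk_embedding w⟩
  simp only [sum_eq, forall_units_sum_mult_mul_log_eq_zero_iff, mk_surjective.forall, ← ht_mk]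

end Dirichlet

section AlgebraicCharacter

variable {K : Type*} [Field K]

/-- Postcomposition with a ring isomorphism, as a bijection between ring homomorphisms. For an
automorphism of `ℂ` it is the Galois action on the embeddings of a number field. -/
def postcompEquiv (R : Type*) {A B : Type*} [NonAssocSemiring R] [NonAssocSemiring A]
    [NonAssocSemiring B] (g : A ≃+* B) : (R →+* A) ≃ (R →+* B) where
  toFun σ := (g : A →+* B).comp σ
  invFun σ := (g.symm : B →+* A).comp σ
  left_inv σ := by ext; simp
  right_inv σ := by ext; simp

theorem complexConjugation_comp (g : ℂ ≃+* ℂ) (σ : K →+* ℂ) :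
    ((complexConjugation g : ℂ ≃+* ℂ) : ℂ →+* ℂ).comp σ =
      (postcompEquiv K g).symm (conjugate (postcompEquiv K g σ)) :=
  rfl

theorem forall_complexConjugation_comp_add_eq_iff (g : ℂ ≃+* ℂ) {S : (K →+* ℂ) → ℤ} {a : ℤ} :
    (∀ σ, S (((complexConjugation g : ℂ ≃+* ℂ) : ℂ →+* ℂ).comp σ) + S σ = a) ↔
      ∀ τ, (S ∘ (postcompEquiv K g).symm) (conjugate τ) + (S ∘ (postcompEquiv K g).symm) τ = a :=
  (postcompEquiv K g).forall_congr fun {σ} ↦ by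
    rw [complexConjugation_comp, Function.comp_apply, Function.comp_apply, Equiv.symm_apply_apply]

variable [NumberField K]

/-- The algebraic character `θ^S`, as a function on all of `K`; its value at `0` is irrelevant. -/
noncomputable def algebraicCharacter (S : (K →+* ℂ) → ℤ) (x : K) : ℂ :=
  ∏ σ, σ x ^ S σ

theorem algebraicCharacter_ne_zero (S : (K →+* ℂ) → ℤ) {x : K} (hx : x ≠ 0) :
    algebraicCharacter S x ≠ 0 :=
  Finset.prod_ne_zero_iff.2 fun σ _ ↦ zpow_ne_zero _ ((map_ne_zero σ).2 hx)

theorem isIntegral_algebraicCharacter_unit (S : (K →+* ℂ) → ℤ) (u : (𝓞 K)ˣ) :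
    IsIntegral ℤ (algebraicCharacter S (u : K)) := by
  refine IsIntegral.prod _ fun σ _ ↦ ?_
  rw [← map_zpow₀, ← coe_zpow]
  exact map_isIntegral_int σ (RingOfIntegers.isIntegral_coe _)

theorem map_algebraicCharacter (g : ℂ ≃+* ℂ) (S : (K →+* ℂ) → ℤ) (x : K) :
    g (algebraicCharacter S x) = algebraicCharacter (S ∘ (postcompEquiv K g).symm) x :=
  calc g (algebraicCharacter S x)
    _ = ∏ σ, postcompEquiv K g σ x ^ S σ := by
      simp only [algebraicCharacter, map_prod, map_zpow₀]
      rfl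
    _ = ∏ τ, τ x ^ S ((postcompEquiv K g).symm τ) := by
      simpa only [Equiv.symm_apply_apply] using
        (postcompEquiv K g).prod_comp fun τ ↦ τ x ^ S ((postcompEquiv K g).symm τ)

theorem log_norm_algebraicCharacter (S : (K →+* ℂ) → ℤ) {x : K} (hx : x ≠ 0) :
    Real.log ‖algebraicCharacter S x‖ = ∑ σ, S σ * Real.log ‖σ x‖ := by
  simp only [algebraicCharacter, norm_prod, norm_zpow]
  rw [Real.log_prod fun σ _ ↦ zpow_ne_zero _ (norm_ne_zero_iff.2 ((map_ne_zero σ).2 hx))]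
  simp only [Real.log_zpow]

theorem two_mul_log_norm_algebraicCharacter (S : (K →+* ℂ) → ℤ) {x : K} (hx : x ≠ 0) :
    2 * Real.log ‖algebraicCharacter S x‖ =
      ∑ σ, ((S (conjugate σ) + S σ : ℤ) : ℝ) * Real.log ‖σ x‖ := by
  have sum_conjugate : ∑ σ : K →+* ℂ, S (conjugate σ) * Real.log ‖σ x‖ =
      ∑ σ, S σ * Real.log ‖σ x‖ := by
    rw [← (postcompEquiv K starRingAut).sum_comp fun σ ↦ S σ * Real.log ‖σ x‖]
    refine Finset.sum_congr rfl fun σ _ ↦ ?_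
    rw [← RCLike.norm_conj (σ x)]
    rfl
  simp only [Int.cast_add, add_mul, Finset.sum_add_distrib, sum_conjugate,
    log_norm_algebraicCharacter S hx, two_mul]

theorem forall_units_norm_algebraicCharacter_eq_one_iff {S : (K →+* ℂ) → ℤ} :
    (∀ u : (𝓞 K)ˣ, ‖algebraicCharacter S (u : K)‖ = 1) ↔
      ∃ a, ∀ σ, S (conjugate σ) + S σ = a := by
  let t : (K →+* ℂ) → ℝ := fun σ ↦ (S (conjugate σ) + S σ : ℤ)
  have ht (σ : K →+* ℂ) : t (conjugate σ) = t σ := by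
    simp only [t, star_star, add_comm]
  have norm_eq_one_iff (u : (𝓞 K)ˣ) : ‖algebraicCharacter S (u : K)‖ = 1 ↔
      ∑ σ, t σ * Real.log ‖σ (u : K)‖ = 0 := by
    have hpos := norm_pos_iff.2 (algebraicCharacter_ne_zero S (coe_ne_zero u))
    rw [← two_mul_log_norm_algebraicCharacter S (coe_ne_zero u), mul_eq_zero_iff_left two_ne_zero]
    exact ⟨fun h ↦ h ▸ Real.log_one, Real.eq_one_of_pos_of_log_eq_zero hpos⟩
  rw [forall_congr' norm_eq_one_iff, forall_units_sum_mul_log_norm_eq_zero_iff ht]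
  constructor
  · rintro ⟨a, ha⟩
    let σ₀ : K →+* ℂ := Classical.arbitrary _
    exact ⟨S (conjugate σ₀) + S σ₀, fun σ ↦ Int.cast_injective ((ha σ).trans (ha σ₀).symm)⟩
  · rintro ⟨a, ha⟩
    exact ⟨a, fun σ ↦ congrArg Int.cast (ha σ)⟩

end AlgebraicCharacter

/-- The character `θ^S` is balanced (i.e. `S(c'∘σ) + S(σ)` is independent of `σ` for every
complex conjugation `c'`) if and only if `θ^S(u)` is a root of unity for every unit `u` of the
ring of integers of `K`. -/
theorem stmt0 (K : Type*) [Field K] [NumberField K] (S : (K →+* ℂ) → ℤ) :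
    (∀ g : ℂ ≃+* ℂ, ∃ a : ℤ, ∀ σ : K →+* ℂ,
        S (((complexConjugation g : ℂ ≃+* ℂ) : ℂ →+* ℂ).comp σ) + S σ = a) ↔
    (∀ u : (𝓞 K)ˣ, ∃ m : ℕ, 1 ≤ m ∧
        (∏ σ : K →+* ℂ, σ (algebraMap (𝓞 K) K (u : 𝓞 K)) ^ S σ) ^ m = 1) := by
  simp only [forall_complexConjugation_comp_add_eq_iff,
    ← forall_units_norm_algebraicCharacter_eq_one_iff, ← map_algebraicCharacter]
  rw [forall_comm]
  refine forall_congr' fun u ↦ ?_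
  rw [← isOfFinOrder_iff_forall_norm_ringEquiv_eq_one (isIntegral_algebraicCharacter_unit S u)]
  exact isOfFinOrder_iff_pow_eq_one
end

section
/- Let M be a field, N a field extension of M, and A, B be n×n matrices with entries in M. If there exists an invertible n×n matrix P over N such that P⁻¹·A·P = B (where A and B are viewed as matrices over N via the inclusion M ⊆ N), then there exists an invertible n×n matrix Q over M such that Q⁻¹·A·Q = B. In particular, two matrices over M that are conjugate in GL_n(N) are already conjugate in GL_n(M). -/
/-!
Regard `A` and `B` as two `M[X]`-module structures `V` and `W` on `M ^ n`. If `A` and `B` become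
conjugate over `N`, then `f(A)` and `f(B)` have the same rank for every `f : M[X]`, because ranks do
not change under field extension; that is, `f • V` and `f • W` have the same codimension over `M`.
These codimensions determine a finite-dimensional torsion module `V = ⨁ R ⧸ I i` over a principal
ideal domain `R`, where the `I i` are prime powers: passing from `P ^ n • V` to `P ^ (n + 1) • V`
increases the codimension by the dimension of `P ^ n ⧸ P ^ (n + 1)` times the number of summands
with `I i ≤ P ^ (n + 1)`. Hence `V` and `W` are isomorphic over `M[X]`, which means that `A` and `B`
are conjugate over `M`.
-/

open Module Polynomial

section PrimePowerIdeals

variable {R : Type*} [CommRing R] [IsDedekindDomain R] {I P : Ideal R}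

theorem sup_prime_pow_succ_eq_of_not_le (hP : Prime P) {n : ℕ} (h : ¬I ≤ P ^ (n + 1)) :
    I ⊔ P ^ (n + 1) = I ⊔ P ^ n := by
  obtain ⟨j, hj, hassoc⟩ := (dvd_prime_pow hP (n + 1)).1 (Ideal.dvd_iff_le.2 le_sup_right)
  have hsup : I ⊔ P ^ (n + 1) = P ^ j := associated_iff_eq.1 hassoc
  have hjn : j ≤ n := by
    refine Nat.lt_succ_iff.1 (hj.lt_of_ne ?_)
    rintro rfl
    exact h (sup_eq_right.1 hsup)
  refine le_antisymm (sup_le_sup_left (Ideal.pow_le_pow_right n.le_succ) I) ?_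
  exact sup_le le_sup_left (hsup ▸ Ideal.pow_le_pow_right hjn)

theorem eq_or_le_prime_pow_succ_of_le (hI : IsPrimePow I) (hP : Prime P) {n : ℕ}
    (h : I ≤ P ^ (n + 1)) : I = P ^ (n + 1) ∨ I ≤ P ^ (n + 2) := by
  obtain ⟨Q, k, hQ, -, rfl⟩ := hI
  have hPQ : P = Q := by
    have hdvd : P ∣ Q ^ k := (dvd_pow_self P n.succ_ne_zero).trans (Ideal.dvd_iff_le.2 h)
    exact associated_iff_eq.1 (hP.associated_of_dvd hQ (hP.dvd_of_dvd_pow hdvd))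
  subst hPQ
  have hk : n + 1 ≤ k := (pow_dvd_pow_iff hP.ne_zero hP.not_isUnit).1 (Ideal.dvd_iff_le.2 h)
  obtain rfl | hk := hk.eq_or_lt
  · exact .inl rfl
  · exact .inr (Ideal.pow_le_pow_right hk)

end PrimePowerIdeals

section QuotientDimension

variable {R ι κ : Type*} [CommRing R]

theorem finite_quotient_of_le (k : Type*) [CommSemiring k] [Algebra k R] {I J : Ideal R}
    (h : I ≤ J) [Module.Finite k (R ⧸ I)] :
    Module.Finite k (R ⧸ J) :=
  .of_surjective (Submodule.factor h |>.restrictScalars k) (Submodule.factor_surjective h)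

variable (k : Type*) [Field k] [Algebra k R]

theorem finrank_quotient_lt_of_lt {I J : Ideal R} (h : I < J) [Module.Finite k (R ⧸ I)] :
    finrank k (R ⧸ J) < finrank k (R ⧸ I) := by
  have := finite_quotient_of_le k h.le
  let f : (R ⧸ I) →ₗ[k] R ⧸ J := (Submodule.factor h.le).restrictScalars k
  have hf : Function.Surjective f := Submodule.factor_surjective h.le
  refine (LinearMap.finrank_le_finrank_of_surjective hf).lt_of_ne fun heq ↦ h.not_ge fun x hx ↦ ?_
  have hinj : Function.Injective f :=
    (LinearMap.injective_iff_surjective_of_finrank_eq_finrank heq.symm).2 hf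
  refine Ideal.Quotient.eq_zero_iff_mem.1 (hinj ?_)
  rw [map_zero]
  exact Ideal.Quotient.eq_zero_iff_mem.2 hx

theorem finrank_pi_quotient_quotient_smul_top [Fintype ι] (I : ι → Ideal R)
    [∀ i, Module.Finite k (R ⧸ I i)] (J : Ideal R) :
    finrank k ((Π i, R ⧸ I i) ⧸ (J • ⊤ : Submodule R (Π i, R ⧸ I i))) =
      ∑ i, finrank k (R ⧸ I i ⊔ J) := by
  classical
  have hJ (i : ι) : (J • ⊤ : Submodule R (R ⧸ I i)) = Submodule.map (I i).mkQ J := by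
    rw [← Submodule.range_mkQ (I i), ← Submodule.map_top, ← Submodule.map_smul'', smul_eq_mul,
      Ideal.mul_top]
  let e : ((Π i, R ⧸ I i) ⧸ (J • ⊤ : Submodule R (Π i, R ⧸ I i))) ≃ₗ[R] Π i, R ⧸ I i ⊔ J :=
    (TensorProduct.quotTensorEquivQuotSMul _ J).symm ≪≫ₗ
      TensorProduct.piRight R R (R ⧸ J) (fun i ↦ R ⧸ I i) ≪≫ₗ
      LinearEquiv.piCongrRight fun i ↦ TensorProduct.quotTensorEquivQuotSMul (R ⧸ I i) J ≪≫ₗ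
        Submodule.quotEquivOfEq _ _ (hJ i) ≪≫ₗ
        Submodule.quotientQuotientEquivQuotientSup (I i) J
  have (i : ι) : Module.Finite k (R ⧸ I i ⊔ J) :=
    finite_quotient_of_le k (le_sup_left : I i ≤ I i ⊔ J)
  rw [(e.restrictScalars k).finrank_eq, finrank_pi_fintype]

variable [IsDedekindDomain R]

open scoped Classical in
theorem sum_finrank_quotient_sup_prime_pow_succ [Fintype ι] (I : ι → Ideal R) {P : Ideal R}
    (hP : Prime P) (n : ℕ) :
    ∑ i, finrank k (R ⧸ I i ⊔ P ^ (n + 1)) +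
        Fintype.card {i // I i ≤ P ^ (n + 1)} * finrank k (R ⧸ P ^ n) =
      ∑ i, finrank k (R ⧸ I i ⊔ P ^ n) +
        Fintype.card {i // I i ≤ P ^ (n + 1)} * finrank k (R ⧸ P ^ (n + 1)) := by
  have hterm (i : ι) : finrank k (R ⧸ I i ⊔ P ^ (n + 1)) +
        (if I i ≤ P ^ (n + 1) then finrank k (R ⧸ P ^ n) else 0) =
      finrank k (R ⧸ I i ⊔ P ^ n) +
        (if I i ≤ P ^ (n + 1) then finrank k (R ⧸ P ^ (n + 1)) else 0) := by
    split_ifs with h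
    · rw [sup_of_le_right h, sup_of_le_right (h.trans (Ideal.pow_le_pow_right n.le_succ)), add_comm]
    · rw [sup_prime_pow_succ_eq_of_not_le hP h]
  simpa [Finset.sum_add_distrib, Finset.sum_ite, Fintype.card_subtype] using
    Finset.sum_congr (rfl : Finset.univ = Finset.univ) fun i _ ↦ hterm i

variable {k} [Fintype ι] [Fintype κ] {I : ι → Ideal R} {J : κ → Ideal R}
  [∀ i, Module.Finite k (R ⧸ I i)] [∀ j, Module.Finite k (R ⧸ J j)]

open scoped Classical in
theorem card_le_prime_pow_succ_eq
    (h : ∀ K : Ideal R, ∑ i, finrank k (R ⧸ I i ⊔ K) = ∑ j, finrank k (R ⧸ J j ⊔ K))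
    {P : Ideal R} (hP : Prime P) (n : ℕ) :
    Fintype.card {i // I i ≤ P ^ (n + 1)} = Fintype.card {j // J j ≤ P ^ (n + 1)} := by
  by_cases hfin : Module.Finite k (R ⧸ P ^ (n + 1))
  · have hI := sum_finrank_quotient_sup_prime_pow_succ k I hP n
    have hJ := sum_finrank_quotient_sup_prime_pow_succ k J hP n
    have hP' := Ideal.isPrime_of_prime hP
    obtain ⟨d, hd⟩ := Nat.exists_eq_add_of_lt
      (finrank_quotient_lt_of_lt k (Ideal.pow_succ_lt_pow hP.ne_zero n))
    rw [h, h, hd] at hI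
    rw [hd] at hJ
    exact Nat.eq_of_mul_eq_mul_right d.succ_pos (by linarith)
  · have hempty {K : Ideal R} [Module.Finite k (R ⧸ K)] : ¬K ≤ P ^ (n + 1) := fun hK ↦
      hfin (finite_quotient_of_le k hK)
    simp [hempty]

open scoped Classical in
theorem card_eq_prime_pow_succ_add_card_le (hI : ∀ i, IsPrimePow (I i)) {P : Ideal R}
    (hP : Prime P) (n : ℕ) :
    Fintype.card {i // I i = P ^ (n + 1)} + Fintype.card {i // I i ≤ P ^ (n + 2)} =
      Fintype.card {i // I i ≤ P ^ (n + 1)} := by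
  have hP' := Ideal.isPrime_of_prime hP
  have hlt : P ^ (n + 2) < P ^ (n + 1) := Ideal.pow_succ_lt_pow hP.ne_zero (n + 1)
  have hdisj : Disjoint (fun i ↦ I i = P ^ (n + 1)) (fun i ↦ I i ≤ P ^ (n + 2)) :=
    Pi.disjoint_iff.2 fun i ↦ Prop.disjoint_iff.2 fun ⟨heq, hle⟩ ↦ hlt.not_ge (heq ▸ hle)
  rw [← Fintype.card_subtype_or_disjoint _ _ hdisj]
  refine Fintype.card_congr (Equiv.subtypeEquivRight fun i ↦ ⟨?_, ?_⟩)
  · rintro (heq | hle)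
    exacts [heq.le, hle.trans hlt.le]
  · exact eq_or_le_prime_pow_succ_of_le (hI i) hP

theorem exists_equiv_of_sum_finrank_quotient_sup_eq
    (hI : ∀ i, IsPrimePow (I i)) (hJ : ∀ j, IsPrimePow (J j))
    (h : ∀ K : Ideal R, ∑ i, finrank k (R ⧸ I i ⊔ K) = ∑ j, finrank k (R ⧸ J j ⊔ K)) :
    ∃ σ : ι ≃ κ, ∀ i, J (σ i) = I i := by
  classical
  have hcard (Q : Ideal R) : Fintype.card {i // I i = Q} = Fintype.card {j // J j = Q} := by
    by_cases hQ : IsPrimePow Q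
    · obtain ⟨P, n, hP, hn, rfl⟩ := hQ
      obtain ⟨n, rfl⟩ := Nat.exists_eq_add_one.2 hn
      have hI' := card_eq_prime_pow_succ_add_card_le hI hP n
      have hJ' := card_eq_prime_pow_succ_add_card_le hJ hP n
      rw [card_le_prime_pow_succ_eq h hP n, card_le_prime_pow_succ_eq h hP (n + 1)] at hI'
      exact Nat.add_right_cancel (hI'.trans hJ'.symm)
    · have hI' (i : ι) : I i ≠ Q := fun hi ↦ hQ (hi ▸ hI i)
      have hJ' (j : κ) : J j ≠ Q := fun hj ↦ hQ (hj ▸ hJ j)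
      simp [hI', hJ']
  let e (Q : Ideal R) : {i // I i = Q} ≃ {j // J j = Q} := Fintype.equivOfCardEq (hcard Q)
  exact ⟨Equiv.ofFiberEquiv e, fun i ↦ Equiv.ofFiberEquiv_map e i⟩

end QuotientDimension

section TorsionModules

universe u

variable {k V W : Type*} {R : Type u} [CommRing R] [AddCommGroup V] [Module R V]
  [AddCommGroup W] [Module R W]

theorem nonempty_linearEquiv_pi_subtype {R ι : Type*} {X : ι → Type*} [Semiring R]
    [∀ i, AddCommMonoid (X i)] [∀ i, Module R (X i)] (p : ι → Prop)
    (h : ∀ i, ¬p i → Subsingleton (X i)) :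
    Nonempty ((Π i, X i) ≃ₗ[R] Π i : {i // p i}, X i) := by
  refine ⟨.ofBijective (LinearMap.pi fun i : {i // p i} ↦ LinearMap.proj i.1)
    ⟨fun x y hxy ↦ funext fun i ↦ ?_, Subtype.surjective_restrict p⟩⟩
  by_cases hi : p i
  · exact congrFun hxy ⟨i, hi⟩
  · exact (h i hi).elim (x i) (y i)

theorem finrank_quotient_smul_top_congr (k : Type*) [Field k] [Algebra k R] [Module k V]
    [IsScalarTower k R V] [Module k W] [IsScalarTower k R W] (e : V ≃ₗ[R] W) (K : Ideal R) :
    finrank k (V ⧸ (K • ⊤ : Submodule R V)) = finrank k (W ⧸ (K • ⊤ : Submodule R W)) := by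
  have hmap : (K • ⊤ : Submodule R V).map e.toLinearMap = K • ⊤ := by
    rw [Submodule.map_smul'', Submodule.map_top, LinearEquiv.range]
  exact ((Submodule.Quotient.equiv _ _ e hmap).restrictScalars k).finrank_eq

variable [IsDomain R] [IsPrincipalIdealRing R]

theorem exists_linearEquiv_pi_quotient_isPrimePow [Module.Finite R V] (hV : IsTorsion R V) :
    ∃ (ι : Type u) (_ : Fintype ι) (I : ι → Ideal R), (∀ i, IsPrimePow (I i)) ∧
      Nonempty (V ≃ₗ[R] Π i, R ⧸ I i) := by
  classical
  obtain ⟨ι, _, p, hp, e, ⟨f⟩⟩ := equiv_directSum_of_isTorsion hV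
  have htrivial (i : ι) (hi : ¬e i ≠ 0) : Subsingleton (R ⧸ Ideal.span {p i ^ e i}) := by
    rw [Ideal.Quotient.subsingleton_iff, not_not.1 hi, pow_zero, Ideal.span_singleton_one]
  obtain ⟨g⟩ := nonempty_linearEquiv_pi_subtype (R := R) (fun i ↦ e i ≠ 0) htrivial
  refine ⟨{i // e i ≠ 0}, inferInstance, fun i ↦ Ideal.span {p i ^ e i}, fun i ↦ ?_,
    ⟨f ≪≫ₗ DirectSum.linearEquivFunOnFintype R ι _ ≪≫ₗ g⟩⟩
  refine ⟨Ideal.span {p i}, e i, ?_, Nat.pos_of_ne_zero i.2, Ideal.span_singleton_pow _ _⟩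
  exact Ideal.prime_of_isPrime (by simpa using (hp i).ne_zero)
    ((Ideal.span_singleton_prime (hp i).ne_zero).2 (hp i).prime)

theorem nonempty_linearEquiv_of_finrank_quotient_smul_top_eq [Field k] [Algebra k R]
    [Module k V] [IsScalarTower k R V] [Module k W] [IsScalarTower k R W]
    [Module.Finite k V] [Module.Finite k W] (hV : IsTorsion R V) (hW : IsTorsion R W)
    (h : ∀ K : Ideal R, finrank k (V ⧸ (K • ⊤ : Submodule R V)) =
      finrank k (W ⧸ (K • ⊤ : Submodule R W))) :
    Nonempty (V ≃ₗ[R] W) := by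
  have := Module.Finite.of_restrictScalars_finite k R V
  have := Module.Finite.of_restrictScalars_finite k R W
  obtain ⟨ι, _, I, hI, ⟨e⟩⟩ := exists_linearEquiv_pi_quotient_isPrimePow hV
  obtain ⟨κ, _, J, hJ, ⟨f⟩⟩ := exists_linearEquiv_pi_quotient_isPrimePow hW
  have hIfin (i : ι) : Module.Finite k (R ⧸ I i) :=
    .of_surjective ((LinearMap.proj i ∘ₗ e.toLinearMap).restrictScalars k)
      ((Function.surjective_eval i).comp e.surjective)
  have hJfin (j : κ) : Module.Finite k (R ⧸ J j) :=
    .of_surjective ((LinearMap.proj j ∘ₗ f.toLinearMap).restrictScalars k)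
      ((Function.surjective_eval j).comp f.surjective)
  obtain ⟨σ, hσ⟩ := exists_equiv_of_sum_finrank_quotient_sup_eq (k := k) hI hJ fun K ↦ by
    rw [← finrank_pi_quotient_quotient_smul_top, ← finrank_pi_quotient_quotient_smul_top,
      ← finrank_quotient_smul_top_congr k e, ← finrank_quotient_smul_top_congr k f, h]
  obtain rfl : I = J ∘ σ := funext fun i ↦ (hσ i).symm
  exact ⟨e ≪≫ₗ LinearEquiv.piCongrLeft R (fun j ↦ R ⧸ J j) σ ≪≫ₗ f.symm⟩

end TorsionModules

section Endomorphisms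

variable {k V W : Type*} [Field k] [AddCommGroup V] [Module k V] [AddCommGroup W] [Module k W]

theorem finrank_aeval_quotient_span_singleton_smul_top (φ : End k V) (f : k[X]) :
    finrank k (AEval' φ ⧸ (Ideal.span {f} • ⊤ : Submodule k[X] (AEval' φ))) =
      finrank k (V ⧸ (aeval φ f).range) := by
  have hmap : (aeval φ f).range.map (AEval'.of φ).toLinearMap =
      (Ideal.span {f} • ⊤ : Submodule k[X] (AEval' φ)).restrictScalars k := by
    ext v
    rw [Submodule.restrictScalars_mem, Submodule.ideal_span_singleton_smul,
      Submodule.mem_smul_pointwise_iff_exists]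
    constructor
    · rintro ⟨-, ⟨w, rfl⟩, rfl⟩
      exact ⟨AEval'.of φ w, trivial, rfl⟩
    · rintro ⟨w, -, rfl⟩
      obtain ⟨w, rfl⟩ := (AEval'.of φ).surjective w
      exact ⟨aeval φ f w, ⟨w, rfl⟩, rfl⟩
  exact ((Submodule.Quotient.equiv _ _ (AEval'.of φ) hmap).trans
    (Submodule.Quotient.restrictScalarsEquiv k _)).finrank_eq.symm

theorem exists_linearEquiv_comp_eq_of_finrank_range_aeval_eq [Module.Finite k V] [Module.Finite k W]
    {φ : End k V} {ψ : End k W}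
    (h : ∀ f : k[X], finrank k (aeval φ f).range = finrank k (aeval ψ f).range) :
    ∃ e : V ≃ₗ[k] W, e.toLinearMap ∘ₗ φ = ψ ∘ₗ e.toLinearMap := by
  have hVW : finrank k V = finrank k W := by
    have h1 := h 1
    rwa [map_one (aeval φ), map_one (aeval ψ), Module.End.one_eq_id, Module.End.one_eq_id,
      LinearMap.range_id, LinearMap.range_id, finrank_top, finrank_top] at h1
  obtain ⟨e⟩ : Nonempty (AEval' φ ≃ₗ[k[X]] AEval' ψ) := by
    refine nonempty_linearEquiv_of_finrank_quotient_smul_top_eq (k := k)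
      (AEval.isTorsion_of_finiteDimensional k V φ) (AEval.isTorsion_of_finiteDimensional k W ψ)
      fun K ↦ ?_
    obtain ⟨f, rfl⟩ := IsPrincipalIdealRing.principal K
    rw [Ideal.submodule_span_eq, finrank_aeval_quotient_span_singleton_smul_top,
      finrank_aeval_quotient_span_singleton_smul_top]
    have := (aeval φ f).range.finrank_quotient_add_finrank
    have := (aeval ψ f).range.finrank_quotient_add_finrank
    have := h f
    omega
  refine ⟨AEval'.of φ ≪≫ₗ e.restrictScalars k ≪≫ₗ (AEval'.of ψ).symm, ?_⟩
  ext v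
  simp [← AEval'.X_smul_of]

end Endomorphisms

theorem semiconjBy_aeval {R A : Type*} [CommSemiring R] [Semiring A] [Algebra R A] {a x y : A}
    (h : SemiconjBy a x y) (f : R[X]) : SemiconjBy a (aeval x f) (aeval y f) := by
  induction f using Polynomial.induction_on' with
  | add f g hf hg => simpa only [map_add] using hf.add_right hg
  | monomial n c =>
    simp only [aeval_monomial]
    exact SemiconjBy.mul_right (Algebra.commutes c a).symm (h.pow_right n)

section Matrices

variable {ι K L : Type*} [Fintype ι] [Field K] [Field L]

theorem rank_mul_mul_of_isUnit {R : Type*} [CommRing R] [DecidableEq ι] {S T : Matrix ι ι R}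
    (hS : IsUnit S) (hT : IsUnit T) (A : Matrix ι ι R) : (S * A * T).rank = A.rank := by
  rw [Matrix.rank_mul_eq_left_of_isUnit_det _ _ (T.isUnit_iff_isUnit_det.1 hT),
    Matrix.rank_mul_eq_right_of_isUnit_det _ _ (S.isUnit_iff_isUnit_det.1 hS)]

theorem rank_matrix_map (f : K →+* L) (A : Matrix ι ι K) : (A.map f).rank = A.rank := by
  classical
  obtain ⟨S, T, D, hS, hT, hD⟩ : ∃ (S T : Matrix ι ι K) (D : ι → K), IsUnit S ∧ IsUnit T ∧
      S * A * T = Matrix.diagonal D := by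
    obtain ⟨l, l', D, hD⟩ := Matrix.Pivot.exists_list_transvec_mul_mul_list_transvec_eq_diagonal A
    refine ⟨_, _, D, ?_, ?_, hD⟩ <;> simp [Matrix.isUnit_iff_isUnit_det]
  have hD' : f.mapMatrix S * A.map f * f.mapMatrix T = Matrix.diagonal (f ∘ D) := by
    rw [← RingHom.mapMatrix_apply, ← map_mul, ← map_mul, hD, RingHom.mapMatrix_apply,
      Matrix.diagonal_map (map_zero f), Function.comp_def]
  rw [← rank_mul_mul_of_isUnit hS hT A, hD,
    ← rank_mul_mul_of_isUnit (hS.map f.mapMatrix) (hT.map f.mapMatrix), hD',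
    Matrix.rank_diagonal, Matrix.rank_diagonal]
  simp

variable [DecidableEq ι]

theorem rank_eq_of_semiconjBy {R : Type*} [CommRing R] {P A B : Matrix ι ι R} (hP : IsUnit P)
    (h : SemiconjBy P A B) : A.rank = B.rank := by
  have hdet := P.isUnit_iff_isUnit_det.1 hP
  rw [← Matrix.rank_mul_eq_right_of_isUnit_det P A hdet, h.eq,
    Matrix.rank_mul_eq_left_of_isUnit_det P B hdet]

theorem rank_aeval_eq_of_semiconjBy_map (f : K →+* L) {A B : Matrix ι ι K} {P : Matrix ι ι L}
    (hP : IsUnit P) (h : SemiconjBy P (A.map f) (B.map f)) (g : K[X]) :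
    (aeval A g).rank = (aeval B g).rank := by
  have haeval (C : Matrix ι ι K) : (aeval C g).map f = aeval (C.map f) (g.map f) := by
    refine map_aeval_eq_aeval_map (φ := f) (ψ := f.mapMatrix) (RingHom.ext fun c ↦ ?_) g C
    simp [Matrix.algebraMap_eq_diagonal]
  rw [← rank_matrix_map f, haeval, rank_eq_of_semiconjBy hP (semiconjBy_aeval h _), ← haeval,
    rank_matrix_map f]

theorem exists_isUnit_semiconjBy_of_rank_aeval_eq {A B : Matrix ι ι K}
    (h : ∀ f : K[X], (aeval A f).rank = (aeval B f).rank) :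
    ∃ Q : Matrix ι ι K, IsUnit Q ∧ SemiconjBy Q A B := by
  have haeval (C : Matrix ι ι K) (f : K[X]) :
      finrank K (aeval C.toLin' f).range = (aeval C f).rank := by
    rw [Matrix.rank, ← Matrix.toLin'_apply']
    exact congrArg (fun φ ↦ finrank K (LinearMap.range φ))
      (aeval_algHom_apply Matrix.toLinAlgEquiv' C f)
  obtain ⟨e, he⟩ := exists_linearEquiv_comp_eq_of_finrank_range_aeval_eq (φ := A.toLin')
    (ψ := B.toLin') (by simpa only [haeval] using h)
  refine ⟨LinearMap.toMatrix' e.toLinearMap, ?_, ?_⟩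
  · rw [Matrix.isUnit_iff_isUnit_det, LinearMap.det_toMatrix']
    exact e.isUnit_det'
  · simpa [SemiconjBy, LinearMap.toMatrix'_comp] using congrArg LinearMap.toMatrix' he

end Matrices

theorem stmt4_general {K L ι : Type*} [Field K] [CommRing L] [Nontrivial L] [Algebra K L]
    [Fintype ι] [DecidableEq ι] (A B : Matrix ι ι K)
    (h : ∃ P : Matrix ι ι L, IsUnit P ∧
        P⁻¹ * A.map (algebraMap K L) * P = B.map (algebraMap K L)) :
    ∃ Q : Matrix ι ι K, IsUnit Q ∧ Q⁻¹ * A * Q = B := by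
  obtain ⟨P, hP, hPAB⟩ := h
  obtain ⟨m, hm⟩ := Ideal.exists_maximal L
  let _ := Ideal.Quotient.field m
  let q := Ideal.Quotient.mk m
  have hconj : SemiconjBy P (B.map (algebraMap K L)) (A.map (algebraMap K L)) := by
    rw [SemiconjBy, ← hPAB, Matrix.mul_assoc, Matrix.mul_nonsing_inv_cancel_left _ _
      (P.isUnit_iff_isUnit_det.1 hP)]
  have hrank := rank_aeval_eq_of_semiconjBy_map (q.comp (algebraMap K L)) (hP.map q.mapMatrix)
    (hconj.map q.mapMatrix)
  obtain ⟨Q, hQ, hQAB⟩ := exists_isUnit_semiconjBy_of_rank_aeval_eq hrank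
  refine ⟨Q, hQ, ?_⟩
  rw [Matrix.mul_assoc, ← hQAB.eq, Matrix.nonsing_inv_mul_cancel_left _ _
    (Q.isUnit_iff_isUnit_det.1 hQ)]

/-- Two square matrices over a field `M` that become conjugate over a field extension `N`
are already conjugate over `M`. -/
theorem stmt4 (M N : Type*) [Field M] [Field N] [Algebra M N] (n : ℕ)
    (A B : Matrix (Fin n) (Fin n) M)
    (h : ∃ P : Matrix (Fin n) (Fin n) N, IsUnit P ∧
        P⁻¹ * A.map (algebraMap M N) * P = B.map (algebraMap M N)) :
    ∃ Q : Matrix (Fin n) (Fin n) M, IsUnit Q ∧ Q⁻¹ * A * Q = B :=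
  stmt4_general A B h
end

section
/- Let K and L be number fields, p a rational prime that is unramified in K, and v a maximal ideal of 𝓞_K lying over p whose residue degree is 1 (i.e. 𝓞_K/v has p elements). If σ, τ : K → L are two distinct field embeddings, then the ideals σ(v)𝓞_L and τ(v)𝓞_L of 𝓞_L are comaximal: σ(v)𝓞_L + τ(v)𝓞_L = 𝓞_L. -/
open NumberField

/-!
Let `D` be the ideal of the target ring generated by all differences `σ x - τ x`, and let `I` be
the sum of the ideals generated by `σ(v)` and `τ(v)`. Residue degree one reduces the differences to
those with `x ∈ v`, and unramifiedness writes such an `x` as an element of `pR` plus an element of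
`v²`. On both parts the difference lies in `I * D`, so `D = I * D`. Since `D ≠ 0` is finitely
generated over a domain, Nakayama's lemma gives `1 ∈ I`.
-/

lemma eq_top_of_le_mul {S : Type*} [CommRing S] [IsDomain S] {I D : Ideal S}
    (hD : D.FG) (hD0 : D ≠ ⊥) (h : D ≤ I * D) : I = ⊤ := by
  obtain ⟨r, hrI, hr⟩ := Submodule.exists_mem_and_smul_eq_self_of_fg_of_le_smul I D hD h
  obtain ⟨d, hd, hd0⟩ := Submodule.exists_mem_ne_zero_of_ne_bot hD0
  have hr1 : r = 1 := (mul_eq_right₀ hd0).1 (hr d hd)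
  exact (Ideal.eq_top_iff_one I).2 (hr1 ▸ hrI)

section CoequalizerIdeal

variable {A R S : Type*} [CommRing A] [CommRing R] [CommRing S] [Algebra A R] [Algebra A S]

/-- The ideal of `S` generated by the differences `σ x - τ x`. The quotient by it is the
coequalizer of `σ` and `τ`, so it cuts out the locus of `Spec S` on which the two induced maps to
`Spec R` agree. -/
def coequalizerIdeal (σ τ : R →ₐ[A] S) : Ideal S :=
  Ideal.span (Set.range fun x ↦ σ x - τ x)

variable {σ τ : R →ₐ[A] S}

lemma sub_mem_coequalizerIdeal (x : R) : σ x - τ x ∈ coequalizerIdeal σ τ :=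
  Ideal.subset_span ⟨x, rfl⟩

lemma coequalizerIdeal_eq_bot_iff : coequalizerIdeal σ τ = ⊥ ↔ σ = τ := by
  simp only [coequalizerIdeal, Ideal.span_eq_bot, Set.forall_mem_range, sub_eq_zero,
    AlgHom.ext_iff]

lemma sub_mem_mul_coequalizerIdeal_of_mem_mul {v w : Ideal R} {x : R} (hx : x ∈ v * w) :
    σ x - τ x ∈ (v.map σ ⊔ w.map τ) * coequalizerIdeal σ τ := by
  refine Submodule.mul_induction_on hx (fun a ha b hb ↦ ?_) (fun a b ha hb ↦ ?_)
  · have leibniz : σ (a * b) - τ (a * b) = σ a * (σ b - τ b) + τ b * (σ a - τ a) := by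
      simp only [map_mul]
      ring
    rw [leibniz]
    exact add_mem
      (Ideal.mul_mem_mul (Ideal.mem_sup_left (Ideal.mem_map_of_mem σ ha))
        (sub_mem_coequalizerIdeal b))
      (Ideal.mul_mem_mul (Ideal.mem_sup_right (Ideal.mem_map_of_mem τ hb))
        (sub_mem_coequalizerIdeal a))
  · simpa only [map_add, add_sub_add_comm] using add_mem ha hb

lemma sub_mem_mul_coequalizerIdeal_of_mem_map {𝔭 : Ideal A} {x : R}
    (hx : x ∈ 𝔭.map (algebraMap A R)) :
    σ x - τ x ∈ 𝔭.map (algebraMap A S) * coequalizerIdeal σ τ := by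
  have hx' : x ∈ 𝔭 • (⊤ : Submodule A R) := by
    rwa [Ideal.smul_top_eq_map]
  refine Submodule.smul_induction_on hx' (fun a ha y _ ↦ ?_) (fun y z hy hz ↦ ?_)
  · rw [map_smul, map_smul, ← smul_sub, Algebra.smul_def]
    exact Ideal.mul_mem_mul (Ideal.mem_map_of_mem _ ha) (sub_mem_coequalizerIdeal y)
  · simpa only [map_add, add_sub_add_comm] using add_mem hy hz

lemma coequalizerIdeal_le_mul {𝔭 : Ideal A} {v : Ideal R}
    (h𝔭 : 𝔭.map (algebraMap A R) ≤ v) (hv : v ≤ 𝔭.map (algebraMap A R) ⊔ v ^ 2)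
    (hres : Function.Surjective (algebraMap A (R ⧸ v))) :
    coequalizerIdeal σ τ ≤ (v.map σ ⊔ v.map τ) * coequalizerIdeal σ τ := by
  have h𝔭S : 𝔭.map (algebraMap A S) ≤ v.map σ ⊔ v.map τ := by
    rw [← σ.comp_algebraMap, ← Ideal.map_map]
    exact (Ideal.map_mono h𝔭).trans le_sup_left
  refine Ideal.span_le.2 (Set.range_subset_iff.2 fun x ↦ ?_)
  obtain ⟨a, ha⟩ := hres (Ideal.Quotient.mk v x)
  have hxa : x - algebraMap A R a ∈ v := Ideal.Quotient.eq.1 ha.symm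
  obtain ⟨y, hy, z, hz, hyz⟩ := Submodule.mem_sup.1 (hv hxa)
  have hx : σ x - τ x = (σ y - τ y) + (σ z - τ z) := by
    rw [← sub_add_cancel x (algebraMap A R a), ← hyz]
    simp only [map_add, AlgHom.commutes]
    ring
  rw [hx]
  exact add_mem
    (Ideal.mul_mono_left h𝔭S (sub_mem_mul_coequalizerIdeal_of_mem_map hy))
    (sub_mem_mul_coequalizerIdeal_of_mem_mul (pow_two v ▸ hz))

theorem map_sup_map_eq_top_of_ne [IsDomain S] [IsNoetherianRing S] {𝔭 : Ideal A} {v : Ideal R}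
    (h𝔭 : 𝔭.map (algebraMap A R) ≤ v) (hv : v ≤ 𝔭.map (algebraMap A R) ⊔ v ^ 2)
    (hres : Function.Surjective (algebraMap A (R ⧸ v))) (hστ : σ ≠ τ) :
    v.map σ ⊔ v.map τ = ⊤ :=
  eq_top_of_le_mul (IsNoetherian.noetherian _) (coequalizerIdeal_eq_bot_iff.not.2 hστ)
    (coequalizerIdeal_le_mul h𝔭 hv hres)

end CoequalizerIdeal

lemma sup_sq_eq_of_squarefree {R : Type*} [CommRing R] [IsDedekindDomain R] {I v : Ideal R}
    (hv : v.IsMaximal) (hI : Squarefree I) (hIv : I ≤ v) : I ⊔ v ^ 2 = v := by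
  obtain ⟨J, rfl⟩ := Ideal.dvd_iff_le.2 hIv
  have hJ : ¬J ≤ v := fun hJv ↦
    hv.ne_top (Ideal.isUnit_iff.1 (hI v (mul_dvd_mul_left v (Ideal.dvd_iff_le.2 hJv))))
  have hJv : J ⊔ v = ⊤ := (hv.out.not_le_iff_codisjoint.1 hJ).symm.eq_top
  rw [pow_two, ← Ideal.mul_sup, hJv, Ideal.mul_top]

lemma intCast_surjective_of_prime_card {R : Type*} [Ring R] (hR : (Nat.card R).Prime) :
    Function.Surjective (Int.cast : ℤ → R) := fun x ↦ by
  have := Fact.mk hR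
  have := Nat.finite_of_card_ne_zero hR.ne_zero
  have := Finite.one_lt_card_iff_nontrivial.1 hR.one_lt
  obtain ⟨n, hn⟩ := AddSubgroup.mem_zmultiples_iff.1
    (mem_zmultiples_of_prime_card (g := (1 : R)) (g' := x) rfl one_ne_zero)
  exact ⟨n, by rwa [zsmul_one] at hn⟩

lemma ringOfIntegers_mapRingHom_injective {K L : Type*} [Field K] [NumberField K] [Field L] :
    Function.Injective (RingOfIntegers.mapRingHom : (K →+* L) → 𝓞 K →+* 𝓞 L) := fun _ _ h ↦
  IsFractionRing.injective_comp_algebraMap (A := 𝓞 K)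
    (congrArg (algebraMap (𝓞 L) L).comp h)

theorem stmt6_general {R S : Type*} [CommRing R] [IsDedekindDomain R] [CommRing S] [IsDomain S]
    [IsNoetherianRing S] {p : ℕ} (hp : p.Prime)
    (hunr : Squarefree (Ideal.span {(p : R)})) {v : Ideal R} (hv : v.IsMaximal)
    (hvp : (p : R) ∈ v) (hdeg : Nat.card (R ⧸ v) = p) {σ τ : R →+* S} (hστ : σ ≠ τ) :
    v.map σ ⊔ v.map τ = ⊤ := by
  have hpR : (Ideal.span {(p : ℤ)}).map (algebraMap ℤ R) = Ideal.span {(p : R)} := by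
    simp only [Ideal.map_span, Set.image_singleton, map_natCast]
  have hpv : Ideal.span {(p : R)} ≤ v := (Ideal.span_singleton_le_iff_mem v).2 hvp
  have hne : σ.toIntAlgHom ≠ τ.toIntAlgHom := (RingHom.equivIntAlgHom R S).injective.ne hστ
  have hvsq : v ≤ (Ideal.span {(p : ℤ)}).map (algebraMap ℤ R) ⊔ v ^ 2 := by
    rw [hpR, sup_sq_eq_of_squarefree hv hunr hpv]
  have hres : Function.Surjective (algebraMap ℤ (R ⧸ v)) :=
    intCast_surjective_of_prime_card (hdeg ▸ hp)
  exact map_sup_map_eq_top_of_ne (σ := σ.toIntAlgHom) (τ := τ.toIntAlgHom)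
    (hpR.trans_le hpv) hvsq hres hne

/-- Let `K`, `L` be number fields, `p` a rational prime unramified in `K`, and `v` a maximal
ideal of `𝓞 K` lying over `p` with residue degree `1`.  If `σ ≠ τ` are two embeddings
`K → L`, then the ideals `σ(v)𝓞 L` and `τ(v)𝓞 L` are comaximal. -/
theorem stmt6 (K L : Type*) [Field K] [NumberField K] [Field L] [NumberField L]
    (p : ℕ) (hp : p.Prime)
    (hunr : Squarefree (Ideal.span {(p : 𝓞 K)} : Ideal (𝓞 K)))
    (v : Ideal (𝓞 K)) (hv : v.IsMaximal) (hvp : (p : 𝓞 K) ∈ v)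
    (hdeg : Nat.card (𝓞 K ⧸ v) = p)
    (σ τ : K →+* L) (hστ : σ ≠ τ) :
    Ideal.map (RingOfIntegers.mapRingHom σ) v
      + Ideal.map (RingOfIntegers.mapRingHom τ) v = ⊤ :=
  stmt6_general hp hunr hv hvp hdeg (ringOfIntegers_mapRingHom_injective.ne hστ)
end

section
/- Let g ≥ 1 and n ≥ 1 be integers with φ(n) ≤ 2g, where φ is Euler's totient function, and let p be an odd prime not dividing n. Then the symplectic group Sp_{2g}(𝔽_p) contains an element of multiplicative order exactly n. -/
/-!
For `n ≥ 3` the cyclotomic polynomial `Φₙ` is palindromic of even degree `2k`, so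
`Φₙ(x) = xᵏ q(x + x⁻¹)` for a monic polynomial `q` of degree `k`. Multiplication by the root of `q`
on `R[X]/(q)` is self-adjoint for the symmetric form `(x, y) ↦ λ(xy)`, where `λ` reads off the
coefficient of `Xᵏ⁻¹`. This form is unimodular, because its Gram matrix in the power basis is
anti-triangular with ones on the anti-diagonal. If `C` and `S` are the matrices of the
multiplication and of the form, then `M = [C, -S⁻¹; S, 0]` is symplectic and
`M + M⁻¹ = diag(C, Cᵀ)`, whence `Φₙ(M) = Mᵏ q(diag(C, Cᵀ)) = 0`. A root of `Φₙ` in a ring where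
`n ≠ 0` has order exactly `n`. In larger dimensions one adds an identity block.
-/

open Polynomial Matrix

section Cyclotomic

variable {R : Type*} [CommRing R]

lemma cyclotomic_dvd_geom_sum {d n : ℕ} (hd : d ∈ n.properDivisors) :
    cyclotomic n R ∣ ∑ i ∈ Finset.range (n / d), (X ^ d) ^ i := by
  obtain ⟨hdn, hlt⟩ := Nat.mem_properDivisors.1 hd
  have hreg : IsLeftRegular (X ^ d - 1 : R[X]) :=
    (monic_X_pow_sub_C 1 (Nat.pos_of_dvd_of_pos hdn (by omega)).ne').isRegular.left
  obtain ⟨r, hr⟩ := X_pow_sub_one_mul_cyclotomic_dvd_X_pow_sub_one_of_dvd R hd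
  refine ⟨r, hreg ?_⟩
  calc (X ^ d - 1) * ∑ i ∈ Finset.range (n / d), (X ^ d) ^ i
      = X ^ n - 1 := by rw [mul_geom_sum, ← pow_mul, Nat.mul_div_cancel' hdn]
    _ = (X ^ d - 1) * (cyclotomic n R * r) := by rw [hr, mul_assoc]

lemma orderOf_eq_of_aeval_cyclotomic_eq_zero {A : Type*} [Ring A] [Algebra R A] {n : ℕ} {a : A}
    (hn : (n : A) ≠ 0) (ha : aeval a (cyclotomic n R) = 0) : orderOf a = n := by
  have hpow : a ^ n = 1 := by
    simpa [sub_eq_zero] using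
      aeval_eq_zero_of_dvd_aeval_eq_zero (cyclotomic.dvd_X_pow_sub_one n R) ha
  have hdvd : orderOf a ∣ n := orderOf_dvd_of_pow_eq_one hpow
  have hn₀ : n ≠ 0 := fun h => hn (by simp [h])
  by_contra hne
  have hproper : orderOf a ∈ n.properDivisors :=
    Nat.mem_properDivisors.2 ⟨hdvd, (Nat.le_of_dvd (Nat.pos_of_ne_zero hn₀) hdvd).lt_of_ne hne⟩
  have hquot : ((n / orderOf a : ℕ) : A) = 0 := by
    simpa [pow_orderOf_eq_one] using
      aeval_eq_zero_of_dvd_aeval_eq_zero (cyclotomic_dvd_geom_sum (R := R) hproper) ha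
  apply hn
  rw [← Nat.div_mul_cancel hdvd, Nat.cast_mul, hquot, zero_mul]

lemma reverse_cyclotomic_int {n : ℕ} (hn : 1 < n) :
    (cyclotomic n ℤ).reverse = cyclotomic n ℤ := by
  have hζ := Complex.isPrimitiveRoot_exp n (by omega)
  set ζ := Complex.exp (2 * Real.pi * Complex.I / n)
  have hroot : aeval ζ (cyclotomic n ℤ).reverse = 0 := by
    let : Invertible ζ⁻¹ := invertibleOfNonzero (inv_ne_zero (hζ.ne_zero (by omega)))
    have hinv : eval₂ (algebraMap ℤ ℂ) ζ⁻¹ (cyclotomic n ℤ) = 0 := by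
      rw [eval₂_eq_eval_map, map_cyclotomic]
      exact hζ.inv.isRoot_cyclotomic (by omega)
    simpa [aeval_def] using (eval₂_reverse_eq_zero_iff _ ζ⁻¹ _).2 hinv
  have hdvd : cyclotomic n ℤ ∣ (cyclotomic n ℤ).reverse := by
    rw [cyclotomic_eq_minpoly hζ (by omega)] at hroot ⊢
    exact minpoly.isIntegrallyClosed_dvd (hζ.isIntegral (by omega)) hroot
  have hmonic : (cyclotomic n ℤ).reverse.Monic := by
    rw [Monic, reverse_leadingCoeff, trailingCoeff_eq_coeff_zero] <;>
      simp [cyclotomic_coeff_zero ℤ hn]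
  exact (eq_of_monic_of_dvd_of_natDegree_le (cyclotomic.monic n ℤ) hmonic hdvd
    (reverse_natDegree_le _))

lemma reverse_cyclotomic [Nontrivial R] {n : ℕ} (hn : 1 < n) :
    (cyclotomic n R).reverse = cyclotomic n R := by
  rw [reverse, natDegree_cyclotomic, ← map_cyclotomic_int n R, reflect_map,
    ← natDegree_cyclotomic n ℤ, ← reverse, reverse_cyclotomic_int hn]

end Cyclotomic

section TracePolynomial

variable {R : Type*} [CommRing R]

lemma isMonicOfDegree_dickson_succ [Nontrivial R] (k : ℕ) (a : R) (n : ℕ) :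
    IsMonicOfDegree (dickson k a (n + 1)) (n + 1) := by
  induction n using Nat.twoStepInduction with
  | zero => simpa using isMonicOfDegree_X R
  | one =>
    have hdeg : (C a * (3 - k : R[X])).natDegree < 2 := by
      rw [← C_eq_natCast, ← map_ofNat C 3, ← C_sub, ← C_mul, natDegree_C]
      exact two_pos
    rw [dickson_two]
    exact (isMonicOfDegree_X_pow R 2).sub hdeg
  | more n h₁ h₂ =>
    have hdeg : (C a * dickson k a (n + 1)).natDegree < n + 3 :=
      (natDegree_C_mul_le _ _).trans_lt (by rw [h₁.natDegree_eq]; omega)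
    have hmul : IsMonicOfDegree (X * dickson k a (n + 2)) (n + 3) := by
      simpa only [add_comm 1] using (isMonicOfDegree_X R).mul h₂
    exact dickson_add_two k a (n + 1) ▸ hmul.sub hdeg

lemma aeval_add_dickson_one_one {A : Type*} [Ring A] [Algebra R A] {x y : A} (hxy : x * y = 1)
    (hyx : y * x = 1) (n : ℕ) : aeval (x + y) (dickson 1 (1 : R) n) = x ^ n + y ^ n := by
  induction n using Nat.twoStepInduction with
  | zero => rw [dickson_zero]; norm_num [map_ofNat]
  | one => simp
  | more n h₁ h₂ =>
    simp only [dickson_add_two, map_sub, map_mul, aeval_X, map_one, one_mul, h₁, h₂]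
    have hx : y * x ^ (n + 1) = x ^ n := by rw [pow_succ', ← mul_assoc, hyx, one_mul]
    have hy : x * y ^ (n + 1) = y ^ n := by rw [pow_succ', ← mul_assoc, hxy, one_mul]
    rw [add_mul, mul_add, mul_add, hx, hy, ← pow_succ', ← pow_succ']
    abel

/-- The trace polynomial `q` of a palindromic polynomial `p` of degree `2 * k`, characterised by
`p(x) = xᵏ q(x + x⁻¹)`. It is written in terms of the Dickson polynomials `D i`, which satisfy
`D i (x + x⁻¹) = xⁱ + x⁻ⁱ`. -/
noncomputable def tracePolynomial (k : ℕ) (p : R[X]) : R[X] :=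
  C (p.coeff k) + ∑ i ∈ Finset.range k, C (p.coeff (k + 1 + i)) * dickson 1 1 (i + 1)

lemma isMonicOfDegree_tracePolynomial [Nontrivial R] {k : ℕ} {p : R[X]}
    (hp : IsMonicOfDegree p (2 * k)) : IsMonicOfDegree (tracePolynomial k p) k := by
  cases k with
  | zero => simp [tracePolynomial, isMonicOfDegree_zero_iff.1 hp, isMonicOfDegree_zero_iff]
  | succ k =>
    have htop : p.coeff (k + 1 + 1 + k) = 1 := by
      rw [← hp.leadingCoeff_eq, leadingCoeff, hp.natDegree_eq]
      congr 1
      omega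
    have hlow : (∑ i ∈ Finset.range k,
        C (p.coeff (k + 1 + 1 + i)) * dickson 1 (1 : R) (i + 1)).natDegree < k + 1 := by
      refine Nat.lt_succ_of_le (natDegree_sum_le_of_forall_le _ _ fun i hi => ?_)
      refine (natDegree_C_mul_le _ _).trans ?_
      rw [(isMonicOfDegree_dickson_succ 1 1 i).natDegree_eq]
      exact Finset.mem_range.1 hi
    rw [tracePolynomial, Finset.sum_range_succ, htop, map_one, one_mul]
    refine .add_left (by simp) (.add_left hlow ?_)
    exact isMonicOfDegree_dickson_succ 1 1 k

lemma sum_range_two_mul_add_one {M : Type*} [AddCommMonoid M] (f : ℕ → M) (k : ℕ) :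
    ∑ i ∈ Finset.range (2 * k + 1), f i =
      f k + ∑ i ∈ Finset.range k, (f (k + 1 + i) + f (k - 1 - i)) := by
  rw [show 2 * k + 1 = k + 1 + k by omega, Finset.sum_range_add, Finset.sum_range_succ,
    Finset.sum_add_distrib, Finset.sum_range_reflect]
  abel

lemma aeval_eq_pow_mul_aeval_tracePolynomial {A : Type*} [Ring A] [Algebra R A] {k : ℕ} {p : R[X]}
    (hdeg : p.natDegree = 2 * k) (hrev : p.reverse = p) {x y : A} (hxy : x * y = 1)
    (hyx : y * x = 1) : aeval x p = x ^ k * aeval (x + y) (tracePolynomial k p) := by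
  have hcoeff {i : ℕ} (hi : i < k) : p.coeff (k - 1 - i) = p.coeff (k + 1 + i) := by
    nth_rw 1 [← hrev]
    rw [coeff_reverse, hdeg, revAt_le (by omega)]
    congr 1
    omega
  have hpow {i : ℕ} (hi : i < k) : x ^ k * y ^ (i + 1) = x ^ (k - 1 - i) := by
    rw [show k = k - 1 - i + (i + 1) by omega, pow_add, mul_assoc,
      ← (show Commute x y from hxy.trans hyx.symm).mul_pow, hxy, one_pow, mul_one]
    congr 1
    omega
  rw [aeval_eq_sum_range, hdeg, sum_range_two_mul_add_one, tracePolynomial, map_add, mul_add,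
    map_sum, Finset.mul_sum]
  congr 1
  · rw [aeval_C, ← Algebra.commutes, Algebra.smul_def]
  refine Finset.sum_congr rfl fun i hi => ?_
  rw [Finset.mem_range] at hi
  rw [hcoeff hi, ← smul_add, map_mul, aeval_C, ← Algebra.smul_def, mul_smul_comm,
    aeval_add_dickson_one_one hxy hyx, mul_add, hpow hi, ← pow_add, add_assoc, add_comm 1]

end TracePolynomial

section FrobeniusForm

variable {R B : Type*} [CommRing R] [CommRing B] [Algebra R B]

/-- The symmetric bilinear form `(x, y) ↦ φ (x * y)` on a commutative algebra attached to a linear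
functional `φ`; every multiplication operator is self-adjoint for it. -/
def frobeniusForm (φ : B →ₗ[R] R) : LinearMap.BilinForm R B :=
  (LinearMap.mul R B).compr₂ φ

variable {ι : Type*} [Fintype ι] [DecidableEq ι] (b : Module.Basis ι R B) (φ : B →ₗ[R] R)

lemma isSymm_toMatrix_frobeniusForm :
    (LinearMap.BilinForm.toMatrix b (frobeniusForm φ)).IsSymm := by
  ext i j
  simp [frobeniusForm, LinearMap.BilinForm.toMatrix_apply, mul_comm]

lemma transpose_leftMulMatrix_mul_toMatrix_frobeniusForm (x : B) :
    (Algebra.leftMulMatrix b x)ᵀ * LinearMap.BilinForm.toMatrix b (frobeniusForm φ) =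
      LinearMap.BilinForm.toMatrix b (frobeniusForm φ) * Algebra.leftMulMatrix b x := by
  rw [Algebra.leftMulMatrix_apply, ← LinearMap.BilinForm.toMatrix_compLeft,
    ← LinearMap.BilinForm.toMatrix_compRight]
  congr 1
  ext y z
  simp [frobeniusForm, mul_left_comm, mul_assoc]

lemma isUnit_det_of_antitriangular {k : ℕ} {S : Matrix (Fin k) (Fin k) R}
    (hzero : ∀ i j : Fin k, (i + j + 1 : ℕ) < k → S i j = 0)
    (hone : ∀ i j : Fin k, (i + j + 1 : ℕ) = k → S i j = 1) : IsUnit S.det := by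
  have htri : (S.submatrix Fin.revPerm id).IsUpperTriangular := fun i j hij =>
    hzero _ _ (by simp only [Fin.revPerm_apply, id_eq, Fin.val_rev, Fin.lt_def] at hij ⊢; omega)
  have hdet : (S.submatrix Fin.revPerm id).det = 1 := by
    rw [det_of_isUpperTriangular htri]
    exact Finset.prod_eq_one fun i _ =>
      hone _ _ (by simp only [Fin.revPerm_apply, id_eq, Fin.val_rev]; omega)
  rw [det_permute] at hdet
  exact .of_mul_eq_one_right _ hdet

/-- The functional on `R[X] ⧸ (q)`, for `q` monic of degree `k`, that reads off the coefficient of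
`Xᵏ⁻¹` in the remainder modulo `q`; its Frobenius form is unimodular. -/
noncomputable def topCoeff {q : R[X]} (hq : q.Monic) : AdjoinRoot q →ₗ[R] R :=
  lcoeff R (q.natDegree - 1) ∘ₗ AdjoinRoot.modByMonicHom hq

lemma topCoeff_root_pow {q : R[X]} (hq : q.Monic) {m : ℕ} (hm : m < q.natDegree) :
    topCoeff hq (AdjoinRoot.root q ^ m) = if m + 1 = q.natDegree then 1 else 0 := by
  nontriviality R
  have hdeg : (X ^ m : R[X]).degree < q.degree := by
    rw [degree_X_pow, degree_eq_natDegree hq.ne_zero]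
    exact_mod_cast hm
  rw [topCoeff, ← AdjoinRoot.mk_X, ← map_pow, LinearMap.comp_apply, AdjoinRoot.modByMonicHom_mk,
    (modByMonic_eq_self_iff hq).2 hdeg, lcoeff_apply, coeff_X_pow]
  congr 1
  grind

lemma isUnit_det_toMatrix_frobeniusForm_topCoeff {q : R[X]} (hq : q.Monic) :
    IsUnit (LinearMap.BilinForm.toMatrix (AdjoinRoot.powerBasisAux' hq)
      (frobeniusForm (topCoeff hq))).det := by
  have hbasis (i : Fin q.natDegree) :
      AdjoinRoot.powerBasisAux' hq i = AdjoinRoot.root q ^ (i : ℕ) :=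
    (AdjoinRoot.powerBasis' hq).basis_eq_pow i
  have hentry (i j : Fin q.natDegree) (hij : (i + j : ℕ) < q.natDegree) :
      LinearMap.BilinForm.toMatrix (AdjoinRoot.powerBasisAux' hq)
        (frobeniusForm (topCoeff hq)) i j = if (i + j + 1 : ℕ) = q.natDegree then 1 else 0 := by
    rw [← topCoeff_root_pow hq hij, LinearMap.BilinForm.toMatrix_apply, hbasis, hbasis, pow_add]
    rfl
  refine isUnit_det_of_antitriangular (fun i j hij => ?_) (fun i j hij => ?_)
  · rw [hentry i j (by omega), if_neg hij.ne]
  · rw [hentry i j (by omega), if_pos hij]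

lemma exists_selfAdjoint_aeval_eq_zero {k : ℕ} {q : R[X]} (hq : IsMonicOfDegree q k) :
    ∃ S C : Matrix (Fin k) (Fin k) R,
      S.IsSymm ∧ IsUnit S.det ∧ Cᵀ * S = S * C ∧ aeval C q = 0 := by
  obtain ⟨rfl, hmonic⟩ := hq
  let b := AdjoinRoot.powerBasisAux' hmonic
  refine ⟨LinearMap.BilinForm.toMatrix b (frobeniusForm (topCoeff hmonic)),
    Algebra.leftMulMatrix b (AdjoinRoot.root q), isSymm_toMatrix_frobeniusForm _ _,
    isUnit_det_toMatrix_frobeniusForm_topCoeff hmonic,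
    transpose_leftMulMatrix_mul_toMatrix_frobeniusForm _ _ _, ?_⟩
  rw [aeval_algHom_apply, AdjoinRoot.aeval_eq, AdjoinRoot.mk_self, map_zero]

end FrobeniusForm

section Matrices

variable {R l m : Type*} [CommRing R] [DecidableEq l] [DecidableEq m]

lemma matrix_natCast_ne_zero [Nonempty l] {n : ℕ} (hn : (n : R) ≠ 0) :
    (n : Matrix l l R) ≠ 0 := by
  rw [← diagonal_natCast, Ne, diagonal_eq_zero]
  exact fun h => hn (congrFun h (Classical.arbitrary l))

variable [Fintype l] [Fintype m]

lemma aeval_transpose (A : Matrix l l R) (q : R[X]) : aeval Aᵀ q = (aeval A q)ᵀ := by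
  induction q using Polynomial.induction_on' with
  | add p q hp hq => simp [hp, hq]
  | monomial n a => simp [aeval_monomial, ← Algebra.smul_def]

lemma aeval_fromBlocks_diagonal (A : Matrix l l R) (D : Matrix m m R) (q : R[X]) :
    aeval (fromBlocks A 0 0 D) q = fromBlocks (aeval A q) 0 0 (aeval D q) := by
  induction q using Polynomial.induction_on' with
  | add p q hp hq => simp [hp, hq, fromBlocks_add]
  | monomial n a =>
    simp [aeval_monomial, ← Algebra.smul_def, fromBlocks_diagonal_pow, fromBlocks_smul]

lemma orderOf_fromBlocks_one (A : Matrix l l R) :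
    orderOf (fromBlocks A 0 0 (1 : Matrix m m R)) = orderOf A := by
  refine orderOf_eq_orderOf_iff.2 fun k => ?_
  rw [fromBlocks_diagonal_pow, one_pow, ← fromBlocks_one, fromBlocks_inj]
  simp

end Matrices

section SymplecticGroup

variable {R : Type*} [CommRing R]

lemma exists_mem_symplecticGroup_aeval_eq_zero {k : ℕ} {p : R[X]} (hp : IsMonicOfDegree p (2 * k))
    (hrev : p.reverse = p) : ∃ M ∈ symplecticGroup (Fin k) R, aeval M p = 0 := by
  nontriviality R
  obtain ⟨S, C, hS, hdet, hSC, hC⟩ :=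
    exists_selfAdjoint_aeval_eq_zero (isMonicOfDegree_tracePolynomial hp)
  have hinv : S * S⁻¹ = 1 := mul_nonsing_inv S hdet
  have hinv' : S⁻¹ * S = 1 := nonsing_inv_mul S hdet
  have hCS : C * S⁻¹ = S⁻¹ * Cᵀ := by
    calc C * S⁻¹ = S⁻¹ * (S * C) * S⁻¹ := by rw [← Matrix.mul_assoc, hinv', Matrix.one_mul]
      _ = S⁻¹ * Cᵀ := by rw [← hSC, Matrix.mul_assoc, Matrix.mul_assoc, hinv, Matrix.mul_one]
  refine ⟨fromBlocks C (-S⁻¹) S 0, ?_, ?_⟩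
  · simp [SymplecticGroup.fromBlocks_mem_iff, hS.eq, hSC, hinv]
  · have hMN : fromBlocks C (-S⁻¹) S 0 * fromBlocks 0 S⁻¹ (-S) Cᵀ = 1 := by
      simp [fromBlocks_multiply, hinv, hinv', hCS]
    have hNM : fromBlocks 0 S⁻¹ (-S) Cᵀ * fromBlocks C (-S⁻¹) S 0 = 1 := by
      simp [fromBlocks_multiply, hinv, hinv', hSC]
    rw [aeval_eq_pow_mul_aeval_tracePolynomial hp.natDegree_eq hrev hMN hNM, fromBlocks_add]
    simp [aeval_fromBlocks_diagonal, aeval_transpose, hC]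

variable {l m n : Type*}

/-- The orthogonal direct sum of a `2l × 2l` and a `2m × 2m` matrix, with the blocks interleaved so
that the standard alternating forms add up to the standard one. -/
def symplecticSum (e : l ⊕ m ≃ n) (A : Matrix (l ⊕ l) (l ⊕ l) R) (B : Matrix (m ⊕ m) (m ⊕ m) R) :
    Matrix (n ⊕ n) (n ⊕ n) R :=
  reindex ((Equiv.sumSumSumComm l l m m).trans (e.sumCongr e))
    ((Equiv.sumSumSumComm l l m m).trans (e.sumCongr e)) (fromBlocks A 0 0 B)

lemma symplecticSum_transpose (e : l ⊕ m ≃ n) (A : Matrix (l ⊕ l) (l ⊕ l) R)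
    (B : Matrix (m ⊕ m) (m ⊕ m) R) : (symplecticSum e A B)ᵀ = symplecticSum e Aᵀ Bᵀ := by
  simp [symplecticSum, fromBlocks_transpose]

lemma symplecticSum_mul [Fintype l] [Fintype m] [Fintype n] (e : l ⊕ m ≃ n)
    (A A' : Matrix (l ⊕ l) (l ⊕ l) R) (B B' : Matrix (m ⊕ m) (m ⊕ m) R) :
    symplecticSum e A B * symplecticSum e A' B' = symplecticSum e (A * A') (B * B') := by
  simp only [symplecticSum, reindex_apply, submatrix_mul_equiv, fromBlocks_multiply,
    Matrix.mul_zero, Matrix.zero_mul, add_zero, zero_add]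

variable [DecidableEq l] [DecidableEq m] [DecidableEq n]

lemma symplecticSum_J (e : l ⊕ m ≃ n) : symplecticSum e (J l R) (J m R) = J n R := by
  ext (i | i) (j | j) <;> obtain ⟨i | i, rfl⟩ := e.surjective i <;>
    obtain ⟨j | j, rfl⟩ := e.surjective j <;> simp [symplecticSum, J, one_apply]

variable [Fintype l] [Fintype n]

lemma orderOf_symplecticSum_one (e : l ⊕ m ≃ n) (A : Matrix (l ⊕ l) (l ⊕ l) R) :
    orderOf (symplecticSum e A 1) = orderOf A := by
  have : Fintype m := .ofInjective (e ∘ Sum.inr) (e.injective.comp Sum.inr_injective)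
  rw [symplecticSum, ← coe_reindexAlgEquiv R R, ← orderOf_fromBlocks_one (m := m ⊕ m) A]
  exact MulEquiv.orderOf_eq (reindexAlgEquiv R R _).toMulEquiv _

lemma symplecticSum_mem [Fintype m] (e : l ⊕ m ≃ n) {A : Matrix (l ⊕ l) (l ⊕ l) R}
    {B : Matrix (m ⊕ m) (m ⊕ m) R} (hA : A ∈ symplecticGroup l R) (hB : B ∈ symplecticGroup m R) :
    symplecticSum e A B ∈ symplecticGroup n R := by
  rw [SymplecticGroup.mem_iff] at hA hB ⊢
  rw [← symplecticSum_J e, symplecticSum_transpose, symplecticSum_mul, symplecticSum_mul, hA, hB]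

lemma exists_mem_symplecticGroup_orderOf_eq_of_card_le {A : Matrix (l ⊕ l) (l ⊕ l) R}
    (hA : A ∈ symplecticGroup l R) (hcard : Fintype.card l ≤ Fintype.card n) :
    ∃ B ∈ symplecticGroup n R, orderOf B = orderOf A := by
  have e : l ⊕ Fin (Fintype.card n - Fintype.card l) ≃ n :=
    Fintype.equivOfCardEq (by simp [hcard])
  exact ⟨symplecticSum e A 1, symplecticSum_mem e hA (one_mem _), orderOf_symplecticSum_one e A⟩

lemma exists_mem_symplecticGroup_orderOf_eq_totient {n : ℕ} (hn : (n : R) ≠ 0) (hn₂ : 2 < n) :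
    ∃ M ∈ symplecticGroup (Fin (n.totient / 2)) R, orderOf M = n := by
  have : Nontrivial R := nontrivial_of_ne _ _ hn
  have hk : 2 * (n.totient / 2) = n.totient := Nat.two_mul_div_two_of_even (Nat.totient_even hn₂)
  have : Nonempty (Fin (n.totient / 2)) := by
    have := Nat.totient_pos.2 (by omega : 0 < n)
    exact Fin.pos_iff_nonempty.1 (by omega)
  have hΦ : IsMonicOfDegree (cyclotomic n R) (2 * (n.totient / 2)) :=
    ⟨by rw [natDegree_cyclotomic, hk], cyclotomic.monic n R⟩
  obtain ⟨M, hM, hroot⟩ :=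
    exists_mem_symplecticGroup_aeval_eq_zero hΦ (reverse_cyclotomic (by omega))
  exact ⟨M, hM, orderOf_eq_of_aeval_cyclotomic_eq_zero (matrix_natCast_ne_zero hn) hroot⟩

end SymplecticGroup

theorem stmt8_general {R l : Type*} [CommRing R] [Fintype l] [DecidableEq l] {n : ℕ}
    (hn : (n : R) ≠ 0) (hφ : n.totient ≤ 2 * Fintype.card l) :
    ∃ M : symplecticGroup l R, orderOf M = n := by
  suffices ∃ M ∈ symplecticGroup l R, orderOf M = n by
    obtain ⟨M, hM, hord⟩ := this
    exact ⟨⟨M, hM⟩, by rw [← hord, ← orderOf_submonoid]⟩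
  obtain rfl | rfl | rfl | hn₂ : n = 0 ∨ n = 1 ∨ n = 2 ∨ 2 < n := by omega
  · simp at hn
  · exact ⟨1, one_mem _, orderOf_one⟩
  · have : Nonempty l := Fintype.card_pos_iff.1 (by rw [Nat.totient_two] at hφ; omega)
    refine ⟨-1, SymplecticGroup.neg_mem (one_mem _), ?_⟩
    exact orderOf_eq_of_aeval_cyclotomic_eq_zero (R := R) (matrix_natCast_ne_zero hn) (by simp)
  · obtain ⟨M, hM, hord⟩ := exists_mem_symplecticGroup_orderOf_eq_totient hn hn₂
    simpa only [hord] using exists_mem_symplecticGroup_orderOf_eq_of_card_le (n := l) hM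
      (by rw [Fintype.card_fin]; omega)

/-- If `φ(n) ≤ 2g` and `p` is an odd prime not dividing `n`, then the symplectic group
`Sp_{2g}(𝔽_p)` contains an element of multiplicative order exactly `n`. -/
theorem stmt8 (g n : ℕ) (hg : 1 ≤ g) (hn : 1 ≤ n) (hφ : Nat.totient n ≤ 2 * g)
    (p : ℕ) (hp : p.Prime) (hodd : p ≠ 2) (hpn : ¬ p ∣ n) :
    ∃ M : Matrix.symplecticGroup (Fin g) (ZMod p), orderOf M = n :=
  stmt8_general (by rwa [Ne, ZMod.natCast_eq_zero_iff]) (by rwa [Fintype.card_fin])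
end

section
/- Let g ≥ 1. Call a positive integer n admissible for g if for all but at most one odd prime p the symplectic group Sp_{2g}(𝔽_p) contains an element of multiplicative order n (i.e., there exists an odd prime p₀ such that for every odd prime p ≠ p₀, Sp_{2g}(𝔽_p) has an element of order n). Then the set of integers admissible for g is finite, and its least common multiple c_g equals the product ∏ p^k taken over all prime powers p^k (p prime, k ≥ 1) satisfying (p−1)p^{k−1} ≤ 2g < (p−1)p^k. -/
/-- An integer `n ≥ 1` is admissible for `g` if for all but at most one odd prime `p`,
the symplectic group `Sp_{2g}(𝔽_p)` contains an element of order `n`. -/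
def AdmissibleForG (g : ℕ) : Set ℕ :=
  {n | 0 < n ∧ ∃ p₀ : ℕ, p₀.Prime ∧ p₀ ≠ 2 ∧
    ∀ p : ℕ, p.Prime → p ≠ 2 → p ≠ p₀ →
      ∃ M : Matrix.symplecticGroup (Fin g) (ZMod p), orderOf M = n}

/-!
Existence: let `z` be a primitive `n`-th root of unity over a finite field `F`, and `x = z + z⁻¹`.
Multiplication by `x` on `F⟮x⟯` is self-adjoint for the nondegenerate trace form, so a matrix `C`
with eigenvalue `x` is self-adjoint for an invertible symmetric `H`, and then the block matrix
`[C, -H⁻¹; H, 0]` is symplectic with eigenvalue `z`. Since `x` has degree `φ(n) / 2` at most (or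
degree `1` if `n ≤ 2`), this fits into `Sp_{2g}(F)` as soon as `φ(n) ≤ 2g`.

Obstruction: the eigenvalues of a matrix in `Sp_{2g}(𝔽_p)` are stable under inversion and under
`z ↦ z ^ p`. By Dirichlet's theorem `p` can be chosen to generate `(ℤ/ℓᵏ)ˣ` up to sign, and then a
single eigenvalue of order `ℓᵏ` forces all `φ(ℓᵏ)` primitive roots among the `2g` eigenvalues.
-/

open Matrix Polynomial IntermediateField

section Totient

variable {N p i j k : ℕ}

/-- The prime powers `p ^ (k + 1)` that are maximal, among the powers of `p`, for having totient at
most `N`. For `N = 2 * g` these are the factors of the product defining `c_g`; exponents are written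
as successors to avoid truncated subtraction. -/
def maximalPrimePowersOfTotientLE (N : ℕ) : Set ℕ :=
  {n | ∃ p k : ℕ, p.Prime ∧ n = p ^ (k + 1) ∧ (p ^ (k + 1)).totient ≤ N ∧
    N < (p ^ (k + 2)).totient}

theorem setOf_prime_pow_eq_maximalPrimePowersOfTotientLE (N : ℕ) :
    {n : ℕ | ∃ p k : ℕ, p.Prime ∧ 1 ≤ k ∧ n = p ^ k ∧ (p - 1) * p ^ (k - 1) ≤ N ∧
      N < (p - 1) * p ^ k} = maximalPrimePowersOfTotientLE N := by
  ext n
  constructor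
  · rintro ⟨p, _ | k, hp, hk, rfl, hle, hlt⟩
    · lia
    refine ⟨p, k, hp, rfl, ?_, ?_⟩
    · rwa [Nat.totient_prime_pow_succ hp, mul_comm]
    · rwa [Nat.totient_prime_pow_succ hp, mul_comm]
  · rintro ⟨p, k, hp, rfl, hle, hlt⟩
    rw [Nat.totient_prime_pow_succ hp, mul_comm] at hle hlt
    exact ⟨p, k + 1, hp, Nat.le_add_left 1 k, rfl, hle, hlt⟩

theorem prime_pow_le_two_mul_totient (hp : p.Prime) (k : ℕ) : p ^ k ≤ 2 * (p ^ k).totient := by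
  obtain _ | k := k
  · simp
  calc
    p ^ (k + 1) = p ^ k * p := pow_succ p k
    _ ≤ p ^ k * (2 * (p - 1)) := Nat.mul_le_mul_left _ (by have := hp.two_le; lia)
    _ = 2 * (p ^ (k + 1)).totient := by rw [Nat.totient_prime_pow_succ hp]; ring

theorem lt_of_totient_prime_pow_lt (hp : p.Prime) (h : (p ^ i).totient < (p ^ j).totient) :
    i < j := by
  contrapose! h
  exact Nat.le_of_dvd (Nat.totient_pos.mpr (pow_pos hp.pos i))
    (Nat.totient_dvd_of_dvd (pow_dvd_pow p h))

theorem finite_maximalPrimePowersOfTotientLE (N : ℕ) :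
    (maximalPrimePowersOfTotientLE N).Finite := by
  refine (Set.finite_Iic (2 * N)).subset ?_
  rintro _ ⟨p, k, hp, rfl, hle, -⟩
  exact (prime_pow_le_two_mul_totient hp (k + 1)).trans (Nat.mul_le_mul_left 2 hle)

theorem pairwise_coprime_maximalPrimePowersOfTotientLE (N : ℕ) :
    (maximalPrimePowersOfTotientLE N).Pairwise Nat.Coprime := by
  rintro _ ⟨p, i, hp, rfl, hi, hi'⟩ _ ⟨q, j, hq, rfl, hj, hj'⟩ hne
  refine Nat.coprime_pow_primes _ _ hp hq ?_
  rintro rfl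
  have hij := lt_of_totient_prime_pow_lt hp (hi.trans_lt hj')
  have hji := lt_of_totient_prime_pow_lt hp (hj.trans_lt hi')
  exact hne (by rw [show i = j by lia])

theorem exists_mem_maximalPrimePowersOfTotientLE_dvd (hp : p.Prime)
    (h : (p ^ (k + 1)).totient ≤ N) : ∃ m ∈ maximalPrimePowersOfTotientLE N, p ^ (k + 1) ∣ m := by
  classical
  have hex : ∃ j, N < (p ^ j).totient := by
    obtain ⟨j, hj⟩ := pow_unbounded_of_one_lt (2 * N) hp.one_lt
    exact ⟨j, by have := prime_pow_le_two_mul_totient hp j; lia⟩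
  have hk : k + 1 < Nat.find hex := lt_of_totient_prime_pow_lt hp (h.trans_lt (Nat.find_spec hex))
  obtain ⟨j, hj⟩ : ∃ j, Nat.find hex = j + 2 := ⟨Nat.find hex - 2, by lia⟩
  refine ⟨p ^ (j + 1), ⟨p, j, hp, rfl, ?_, hj ▸ Nat.find_spec hex⟩, pow_dvd_pow p (by lia)⟩
  exact not_lt.mp (Nat.find_min hex (by lia))

theorem dvd_finprod_maximalPrimePowersOfTotientLE {n : ℕ}
    (hn : ∀ p k : ℕ, p.Prime → p ^ (k + 1) ∣ n → (p ^ (k + 1)).totient ≤ N) :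
    n ∣ ∏ᶠ m ∈ maximalPrimePowersOfTotientLE N, m := by
  have hfin := finite_maximalPrimePowersOfTotientLE N
  rw [Nat.dvd_iff_prime_pow_dvd_dvd]
  rintro p (_ | k) hp hdvd
  · simp
  obtain ⟨m, hm, hpm⟩ := exists_mem_maximalPrimePowersOfTotientLE_dvd hp (hn p k hp hdvd)
  rw [finprod_mem_eq_finite_toFinset_prod _ hfin]
  exact hpm.trans (Finset.dvd_prod_of_mem _ (hfin.mem_toFinset.mpr hm))

theorem finprod_maximalPrimePowersOfTotientLE_dvd {c : ℕ}
    (hc : ∀ m ∈ maximalPrimePowersOfTotientLE N, m ∣ c) :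
    ∏ᶠ m ∈ maximalPrimePowersOfTotientLE N, m ∣ c := by
  have hfin := finite_maximalPrimePowersOfTotientLE N
  rw [finprod_mem_eq_finite_toFinset_prod _ hfin]
  refine Finset.prod_dvd_of_isRelPrime (fun m hm n hn hne ↦ ?_)
    fun m hm ↦ hc m (hfin.mem_toFinset.mp hm)
  exact Nat.coprime_iff_isRelPrime.mp (pairwise_coprime_maximalPrimePowersOfTotientLE N
    (hfin.mem_toFinset.mp hm) (hfin.mem_toFinset.mp hn) hne)

theorem finprod_maximalPrimePowersOfTotientLE_ne_zero (N : ℕ) :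
    ∏ᶠ m ∈ maximalPrimePowersOfTotientLE N, m ≠ 0 := by
  refine finprod_mem_induction (· ≠ 0) one_ne_zero (fun _ _ ↦ mul_ne_zero) ?_
  rintro _ ⟨p, k, hp, rfl, -⟩
  exact pow_ne_zero _ hp.ne_zero

theorem exists_finite_lcm_eq_finprod_maximalPrimePowersOfTotientLE {S : Set ℕ}
    (hS : ∀ n ∈ S, ∀ p k : ℕ, p.Prime → p ^ (k + 1) ∣ n → (p ^ (k + 1)).totient ≤ N)
    (hmem : ∀ p k : ℕ, p.Prime → (p ^ (k + 1)).totient ≤ N → p ^ (k + 1) ∈ S) :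
    ∃ hfin : S.Finite,
      hfin.toFinset.lcm id = ∏ᶠ m ∈ maximalPrimePowersOfTotientLE N, m := by
  have hdvd (n) (hn : n ∈ S) := dvd_finprod_maximalPrimePowersOfTotientLE (hS n hn)
  have hfin : S.Finite := (Set.finite_Iic _).subset fun n hn ↦
    Nat.le_of_dvd (finprod_maximalPrimePowersOfTotientLE_ne_zero N).pos (hdvd n hn)
  refine ⟨hfin, Nat.dvd_antisymm ?_ ?_⟩
  · exact Finset.lcm_dvd fun n hn ↦ hdvd n (hfin.mem_toFinset.mp hn)
  · refine finprod_maximalPrimePowersOfTotientLE_dvd ?_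
    rintro _ ⟨p, k, hp, rfl, hle, -⟩
    exact Finset.dvd_lcm (f := id) (hfin.mem_toFinset.mpr (hmem p k hp hle))

end Totient

section Spectrum

variable {F K A : Type*} [Field F] [Field K] [Algebra F K]

theorem mem_spectrum_map_iff_aeval_charpoly {n : Type*} [Fintype n] [DecidableEq n]
    {M : Matrix n n F} {x : K} :
    x ∈ spectrum K (M.map (algebraMap F K)) ↔ aeval x M.charpoly = 0 := by
  rw [mem_spectrum_iff_isRoot_charpoly, charpoly_map, IsRoot.def, eval_map_algebraMap]

theorem orderOf_map_algebraMap {n : Type*} [Fintype n] [DecidableEq n] (M : Matrix n n F) :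
    orderOf (M.map (algebraMap F K)) = orderOf M :=
  orderOf_injective ((algebraMap F K).mapMatrix : Matrix n n F →+* Matrix n n K).toMonoidHom
    (Matrix.map_injective (algebraMap F K).injective) M

theorem pow_orderOf_eq_one_of_mem_spectrum [Ring A] [Algebra K A] [Nontrivial A] {a : A} {x : K}
    (hx : x ∈ spectrum K a) : x ^ orderOf a = 1 := by
  have hpow := spectrum.pow_mem_pow a (orderOf a) hx
  rwa [pow_orderOf_eq_one, spectrum.one_eq, Set.mem_singleton_iff] at hpow

theorem exists_isPrimitiveRoot_mem_spectrum [IsAlgClosed K] [Ring A] [Algebra K A] {a : A}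
    {p k : ℕ} (hp : p.Prime) [NeZero (p : K)] (ha : orderOf a = p ^ (k + 1)) :
    ∃ x ∈ spectrum K a, IsPrimitiveRoot x (p ^ (k + 1)) := by
  have : Fact p.Prime := ⟨hp⟩
  have : NeZero ((p ^ (k + 1) : ℕ) : K) := ⟨by simpa using NeZero.ne (p : K)⟩
  have hne : a ^ p ^ k - 1 ≠ 0 := by
    refine sub_ne_zero.mpr (pow_ne_one_of_lt_orderOf (pow_ne_zero k hp.ne_zero) ?_)
    rw [ha]
    exact Nat.pow_lt_pow_right hp.one_lt k.lt_succ_self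
  have hmul : aeval a (cyclotomic (p ^ (k + 1)) K) * (a ^ p ^ k - 1) = 0 := by
    have := congrArg (aeval a) (cyclotomic_prime_pow_mul_X_pow_sub_one K p k)
    simpa only [map_mul, map_sub, map_pow, aeval_X, map_one, ← ha, pow_orderOf_eq_one,
      sub_self] using this
  have hunit : ¬ IsUnit (aeval a (cyclotomic (p ^ (k + 1)) K)) := fun h ↦
    hne (h.mul_right_eq_zero.mp hmul)
  rw [← spectrum.zero_mem_iff K, spectrum.map_polynomial_aeval_of_degree_pos _ _
    (degree_cyclotomic_pos _ _ (pow_pos hp.pos _))] at hunit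
  obtain ⟨x, hx, hroot⟩ := hunit
  exact ⟨x, hx, isRoot_cyclotomic_iff.mp hroot⟩

theorem aeval_pow_card_eq_zero [Fintype F] [CommRing A] [Algebra F A]
    {f : F[X]} {x : A} (hx : aeval x f = 0) : aeval (x ^ Fintype.card F) f = 0 := by
  rw [← expand_aeval, FiniteField.expand_card, map_pow, hx, zero_pow Fintype.card_ne_zero]

theorem totient_le_natDegree_of_aeval_eq_zero {f : F[X]} (hf : f ≠ 0) {n : ℕ} {x : K}
    (hx : IsPrimitiveRoot x n)
    (h : ∀ y : K, IsPrimitiveRoot y n → aeval y f = 0) : n.totient ≤ f.natDegree := by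
  classical
  have hsub : primitiveRoots n K ⊆ (f.aroots K).toFinset := fun y hy ↦
    Multiset.mem_toFinset.mpr (mem_aroots.mpr ⟨hf, h y (isPrimitiveRoot_of_mem_primitiveRoots hy)⟩)
  calc
    n.totient = (primitiveRoots n K).card := hx.card_primitiveRoots.symm
    _ ≤ (f.aroots K).toFinset.card := Finset.card_le_card hsub
    _ ≤ (f.aroots K).card := Multiset.toFinset_card_le _
    _ ≤ (f.map (algebraMap F K)).natDegree := card_roots' _
    _ = f.natDegree := natDegree_map _

end Spectrum

section SymplecticCompanion

variable {l R F K : Type*} [Fintype l] [DecidableEq l] [CommRing R] [Field F] [Field K]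

/-- For `H` symmetric and invertible and `C` self-adjoint with respect to `H`, the symplectic matrix
`[C, -H⁻¹; H, 0]`. Its eigenvalues are the `z` for which `z + z⁻¹` is an eigenvalue of `C`, as those
of a companion matrix of `X ^ 2 - C * X + 1`. The inverse is `0` when `H.det` is not a unit. -/
noncomputable def symplecticCompanion (H C : Matrix l l R) : Matrix (l ⊕ l) (l ⊕ l) R :=
  fromBlocks C (-H⁻¹) H 0

theorem symplecticCompanion_mem_symplecticGroup {H C : Matrix l l R} (hH : H.IsSymm)
    (hdet : IsUnit H.det) (hHC : (H * C).IsSymm) :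
    symplecticCompanion H C ∈ symplecticGroup l R := by
  refine SymplecticGroup.fromBlocks_mem_iff.mpr ⟨?_, ?_, ?_⟩
  · rw [hH.eq, ← hHC.eq, transpose_mul, hH.eq]
  · simp
  · simp [hH.eq, mul_nonsing_inv H hdet]

theorem eval_charpoly_fromBlocks_neg_zero {G H C : Matrix l l K} (hGH : G * H = 1) {z : K}
    (hz : z ≠ 0) :
    (fromBlocks C (-G) H 0).charpoly.eval z =
      z ^ Fintype.card l * C.charpoly.eval (z + z⁻¹) := by
  have hinv : z⁻¹ • (1 : Matrix l l K) * z • 1 = 1 := by simp [smul_smul, hz]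
  let _ : Invertible (z • (1 : Matrix l l K)) := invertibleOfLeftInverse _ _ hinv
  have hblocks : scalar (l ⊕ l) z - fromBlocks C (-G) H 0 =
      fromBlocks (z • 1 - C) G (-H) (z • 1) := by
    rw [scalar_apply, ← smul_one_eq_diagonal, ← fromBlocks_one, fromBlocks_smul, sub_eq_add_neg,
      fromBlocks_neg, fromBlocks_add]
    simp [sub_eq_add_neg]
  have hschur : z • 1 - C - G * ⅟(z • (1 : Matrix l l K)) * -H = scalar l (z + z⁻¹) - C := by
    rw [invOf_eq_left_inv hinv, scalar_apply, ← smul_one_eq_diagonal]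
    simp [hGH, add_smul]
    abel
  rw [eval_charpoly, eval_charpoly, hblocks, det_fromBlocks₂₂, hschur]
  simp

theorem aeval_charpoly_symplecticCompanion [Algebra F K] {H : Matrix l l F} (C : Matrix l l F)
    (hdet : IsUnit H.det) {z : K} (hz : z ≠ 0) :
    aeval z (symplecticCompanion H C).charpoly =
      z ^ Fintype.card l * aeval (z + z⁻¹) C.charpoly := by
  have hmap : H⁻¹.map (algebraMap F K) * H.map (algebraMap F K) = 1 := by
    rw [← Matrix.map_mul, nonsing_inv_mul H hdet]
    simp
  rw [← eval_map_algebraMap, ← eval_map_algebraMap, ← charpoly_map, ← charpoly_map,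
    ← eval_charpoly_fromBlocks_neg_zero hmap hz, symplecticCompanion, fromBlocks_map]
  simp [Matrix.map_neg]

end SymplecticCompanion

section TraceForm

section

variable {m A B : Type*} [CommRing A] [CommRing B] [Algebra A B]

theorem isSymm_traceMatrix (b : m → B) : (Algebra.traceMatrix A b).IsSymm := by
  ext i j
  simp [Algebra.traceMatrix_apply, Algebra.traceForm_apply, mul_comm]

variable [Fintype m] [DecidableEq m]

theorem traceMatrix_mul_leftMulMatrix_apply (b : Module.Basis m A B) (x : B) (i j : m) :
    (Algebra.traceMatrix A b * Algebra.leftMulMatrix b x) i j =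
      Algebra.trace A B (b i * (x * b j)) := by
  rw [← b.sum_repr (x * b j), mul_apply, Finset.mul_sum, map_sum]
  refine Finset.sum_congr rfl fun k _ ↦ ?_
  rw [Algebra.leftMulMatrix_eq_repr_mul, mul_smul_comm, map_smul, smul_eq_mul, mul_comm,
    Algebra.traceMatrix_apply, Algebra.traceForm_apply]

theorem isSymm_traceMatrix_mul_leftMulMatrix (b : Module.Basis m A B) (x : B) :
    (Algebra.traceMatrix A b * Algebra.leftMulMatrix b x).IsSymm := by
  ext i j
  rw [transpose_apply, traceMatrix_mul_leftMulMatrix_apply, traceMatrix_mul_leftMulMatrix_apply,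
    mul_left_comm, mul_comm (b j), mul_left_comm]

end

variable {d l R F K : Type*} [Fintype d] [DecidableEq d] [Fintype l] [DecidableEq l] [CommRing R]
  [Field F] [Field K] [Algebra F K]

theorem exists_isSymm_mul_isSymm_charpoly_dvd {H C : Matrix d d R} (hH : H.IsSymm)
    (hdet : IsUnit H.det) (hHC : (H * C).IsSymm) (hcard : Fintype.card d ≤ Fintype.card l) :
    ∃ H' C' : Matrix l l R,
      H'.IsSymm ∧ IsUnit H'.det ∧ (H' * C').IsSymm ∧ C.charpoly ∣ C'.charpoly := by
  let e' := Fin (Fintype.card l - Fintype.card d)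
  obtain ⟨e⟩ : Nonempty (d ⊕ e' ≃ l) := Fintype.card_eq.mp (by simp [e', hcard])
  refine ⟨reindex e e (fromBlocks H 0 0 1), reindex e e (fromBlocks C 0 0 0), ?_, ?_, ?_, ?_⟩
  · exact (IsSymm.fromBlocks hH (by simp) isSymm_one).submatrix _
  · rwa [det_reindex_self, det_fromBlocks_zero₂₁, det_one, mul_one]
  · have hmul : fromBlocks H 0 0 1 * fromBlocks C 0 0 (0 : Matrix e' e' R) =
        fromBlocks (H * C) 0 0 0 := by simp [fromBlocks_multiply]
    rw [reindex_apply, reindex_apply, submatrix_mul_equiv, hmul]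
    exact (IsSymm.fromBlocks hHC (by simp) isSymm_zero).submatrix _
  · rw [charpoly_reindex, charpoly_fromBlocks_zero₁₂]
    exact dvd_mul_right _ _

theorem exists_isSymm_mul_isSymm_aeval_charpoly_eq_zero {x : K} (hx : IsSeparable F x)
    (hcard : Module.finrank F F⟮x⟯ ≤ Fintype.card l) :
    ∃ H C : Matrix l l F,
      H.IsSymm ∧ IsUnit H.det ∧ (H * C).IsSymm ∧ aeval x C.charpoly = 0 := by
  let pb := adjoin.powerBasis hx.isIntegral
  have : FiniteDimensional F F⟮x⟯ := adjoin.finiteDimensional hx.isIntegral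
  have : Algebra.IsSeparable F F⟮x⟯ := (isSeparable_adjoin_simple_iff_isSeparable F K).mpr hx
  have hdet : IsUnit (Algebra.traceMatrix F pb.basis).det :=
    Algebra.discr_isUnit_of_basis F pb.basis
  have hdim : Fintype.card (Fin pb.dim) ≤ Fintype.card l := by
    rwa [Fintype.card_fin, ← pb.finrank]
  obtain ⟨H, C, hH, hHdet, hHC, hC⟩ := exists_isSymm_mul_isSymm_charpoly_dvd
    (isSymm_traceMatrix pb.basis) hdet (isSymm_traceMatrix_mul_leftMulMatrix pb.basis pb.gen) hdim
  rw [charpoly_leftMulMatrix, adjoin.powerBasis_gen, minpoly_gen] at hC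
  exact ⟨H, C, hH, hHdet, hHC, aeval_eq_zero_of_dvd_aeval_eq_zero hC (minpoly.aeval F x)⟩

end TraceForm

section RealSubfield

variable {F K : Type*} [Field F] [Field K] [Algebra F K] {z : K} {n : ℕ}

theorem two_mul_card_image_add_inv_primitiveRoots_le [DecidableEq K] (hn : 2 < n) :
    2 * ((primitiveRoots n K).image fun w ↦ w + w⁻¹).card ≤ (primitiveRoots n K).card := by
  refine Finset.mul_card_image_le_card _ 2 fun y hy ↦ ?_
  obtain ⟨w, hw, rfl⟩ := Finset.mem_image.mp hy
  have hw' := isPrimitiveRoot_of_mem_primitiveRoots hw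
  have hinv : w⁻¹ ∈ primitiveRoots n K := (mem_primitiveRoots (by lia)).mpr hw'.inv
  have hne : w ≠ w⁻¹ := by
    intro h
    have hsq : w ^ 2 = 1 := by
      rw [sq, ← mul_inv_cancel₀ (hw'.ne_zero (by lia)), ← h]
    exact hn.not_ge (Nat.le_of_dvd two_pos (hw'.dvd_of_pow_eq_one 2 hsq))
  exact Finset.one_lt_card.mpr
    ⟨w, by simpa using hw, w⁻¹, by simpa [add_comm] using hinv, hne⟩

theorem natDegree_minpoly_add_inv_le [IsGalois F K] [DecidableEq K] (hn : 0 < n)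
    (hz : IsPrimitiveRoot z n) :
    (minpoly F (z + z⁻¹)).natDegree ≤ ((primitiveRoots n K).image fun w ↦ w + w⁻¹).card := by
  have hint : IsIntegral F (z + z⁻¹) := Algebra.IsIntegral.isIntegral _
  rw [← card_rootSet_eq_natDegree (Algebra.IsSeparable.isSeparable F (z + z⁻¹))
    (Normal.splits inferInstance (z + z⁻¹)), ← Set.toFinset_card]
  refine Finset.card_le_card fun y hy ↦ ?_
  rw [Set.mem_toFinset, ← isConjRoot_iff_mem_minpoly_rootSet hint] at hy
  obtain ⟨σ, rfl⟩ := isConjRoot_iff_exists_algEquiv.mp hy.symm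
  have hσz : σ z ∈ primitiveRoots n K :=
    (mem_primitiveRoots hn).mpr (hz.map_of_injective σ.injective)
  exact Finset.mem_image.mpr ⟨σ z, hσz, by simp⟩

theorem two_mul_finrank_adjoin_add_inv_le [IsGalois F K] (hn : 2 < n) (hz : IsPrimitiveRoot z n) :
    2 * Module.finrank F F⟮z + z⁻¹⟯ ≤ n.totient := by
  classical
  rw [adjoin.finrank (Algebra.IsIntegral.isIntegral _), ← hz.card_primitiveRoots]
  exact (Nat.mul_le_mul_left 2 (natDegree_minpoly_add_inv_le (by lia) hz)).trans
    (two_mul_card_image_add_inv_primitiveRoots_le hn)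

theorem finrank_adjoin_add_inv_le_of_totient_le [IsGalois F K] {m : ℕ} (hn : 0 < n)
    (hz : IsPrimitiveRoot z n) (h : n.totient ≤ 2 * m) :
    Module.finrank F F⟮z + z⁻¹⟯ ≤ m := by
  obtain h2 | h2 := lt_or_ge 2 n
  · have := two_mul_finrank_adjoin_add_inv_le (F := F) h2 hz
    lia
  have hzF : z ∈ (⊥ : IntermediateField F K) := by
    interval_cases n
    · exact (IsPrimitiveRoot.one_right_iff.mp hz) ▸ one_mem _
    · exact hz.eq_neg_one_of_two_right ▸ neg_mem (one_mem _)
  rw [adjoin_simple_eq_bot_iff.mpr (add_mem hzF (inv_mem hzF)), IntermediateField.finrank_bot]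
  have := Nat.totient_pos.mpr hn
  lia

end RealSubfield

theorem exists_orderOf_symplecticGroup_eq {F l : Type*} [Field F] [Finite F] [Fintype l]
    [DecidableEq l] {n : ℕ} [NeZero (n : F)] (hn : n.totient ≤ 2 * Fintype.card l) :
    ∃ M : symplecticGroup l F, orderOf M = n := by
  let K := AlgebraicClosure F
  have : NeZero (n : K) := NeZero.nat_of_injective (algebraMap F K).injective
  have : NeZero n := NeZero.of_neZero_natCast F
  have hn0 : 0 < n := Nat.pos_of_neZero n
  have : Nonempty l := by
    have := Nat.totient_pos.mpr hn0
    exact Fintype.card_pos_iff.mp (by lia)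
  obtain ⟨z, hz⟩ := HasEnoughRootsOfUnity.exists_primitiveRoot K n
  obtain ⟨H, C, hH, hdet, hHC, hC⟩ := exists_isSymm_mul_isSymm_aeval_charpoly_eq_zero
    (Algebra.IsSeparable.isSeparable F (z + z⁻¹))
    (finrank_adjoin_add_inv_le_of_totient_le hn0 hz hn)
  let M : symplecticGroup l F := ⟨_, symplecticCompanion_mem_symplecticGroup hH hdet hHC⟩
  have hzM : z ∈ spectrum K ((M : Matrix (l ⊕ l) (l ⊕ l) F).map (algebraMap F K)) := by
    rw [mem_spectrum_map_iff_aeval_charpoly,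
      aeval_charpoly_symplecticCompanion C hdet (hz.ne_zero hn0.ne'), hC, mul_zero]
  have hdvd : n ∣ orderOf M := by
    rw [← orderOf_submonoid M, ← orderOf_map_algebraMap (K := K)]
    exact hz.dvd_of_pow_eq_one _ (pow_orderOf_eq_one_of_mem_spectrum hzM)
  exact ⟨M ^ (orderOf M / n), orderOf_pow_orderOf_div (orderOf_pos M).ne' hdvd⟩

section GeneratesUpToSign

/-- The unit `a` generates all units up to sign, i.e. `a` and `-1` together generate `Rˣ` (as a
monoid). Frobenius acting as `a` and inversion acting as `-1` then permute transitively the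
primitive `n`-th roots of unity when `R = ZMod n`. -/
def GeneratesUnitsUpToSign {R : Type*} [CommRing R] (a : Rˣ) : Prop :=
  ∀ u : Rˣ, ∃ k : ℕ, u = a ^ k ∨ u = -a ^ k

theorem generatesUnitsUpToSign_of_index_zpowers_eq_two {R : Type*} [CommRing R] [Finite Rˣ]
    {a : Rˣ} (hindex : (Subgroup.zpowers a).index = 2) (hneg : -1 ∉ Subgroup.zpowers a) :
    GeneratesUnitsUpToSign a := by
  intro u
  by_cases hu : u ∈ Subgroup.zpowers a
  · obtain ⟨k, rfl⟩ := mem_powers_iff_mem_zpowers.mpr hu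
    exact ⟨k, .inl rfl⟩
  · have hneg_u : -1 * u ∈ Subgroup.zpowers a :=
      (Subgroup.mul_mem_iff_of_index_two hindex).mpr (iff_of_false hneg hu)
    obtain ⟨k, hk⟩ := mem_powers_iff_mem_zpowers.mpr hneg_u
    exact ⟨k, .inr (by simp_all)⟩

theorem neg_one_notMem_zpowers_of_unitsMap_eq_one {n : ℕ} (hn : 4 ∣ n) {a : (ZMod n)ˣ}
    (ha : ZMod.unitsMap hn a = 1) : -1 ∉ Subgroup.zpowers a := by
  rintro ⟨k, hk⟩
  have hneg : ZMod.unitsMap hn (-1) = -1 := Units.ext (by simp [ZMod.unitsMap_def])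
  have hone := congrArg (ZMod.unitsMap hn) hk
  simp only [map_zpow, ha, _root_.one_zpow, hneg] at hone
  exact absurd hone (by decide)

theorem index_zpowers_eq_two_of_val_eq_five {n : ℕ} {a : (ZMod (2 ^ (n + 2)))ˣ}
    (ha : (a : ZMod (2 ^ (n + 2))) = 5) : (Subgroup.zpowers a).index = 2 := by
  have horder : orderOf a = 2 ^ n := by rw [← orderOf_units, ha, ZMod.orderOf_five]
  have hcard : Nat.card (ZMod (2 ^ (n + 2)))ˣ = 2 ^ n * 2 := by
    rw [Nat.card_eq_fintype_card, ZMod.card_units_eq_totient,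
      Nat.totient_prime_pow_succ Nat.prime_two, pow_succ]
    simp
  have hindex := (Subgroup.zpowers a).card_mul_index
  rw [Nat.card_zpowers, horder, hcard] at hindex
  exact Nat.eq_of_mul_eq_mul_left (by positivity) hindex

theorem exists_generatesUnitsUpToSign_zmod_prime_pow {p : ℕ} (hp : p.Prime) (k : ℕ) :
    ∃ a : (ZMod (p ^ k))ˣ, GeneratesUnitsUpToSign a := by
  have : NeZero (p ^ k) := ⟨pow_ne_zero k hp.ne_zero⟩
  by_cases hcyc : IsCyclic (ZMod (p ^ k))ˣ
  · obtain ⟨a, ha⟩ := IsCyclic.exists_monoid_generator (α := (ZMod (p ^ k))ˣ)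
    refine ⟨a, fun u ↦ ?_⟩
    obtain ⟨j, rfl⟩ := ha u
    exact ⟨j, .inl rfl⟩
  obtain rfl : p = 2 := by
    by_contra h2
    exact hcyc (ZMod.isCyclic_units_of_prime_pow p hp h2 k)
  obtain ⟨n, rfl⟩ : ∃ n, k = n + 2 := by
    rw [ZMod.isCyclic_units_two_pow_iff] at hcyc
    exact ⟨k - 2, by lia⟩
  let a : (ZMod (2 ^ (n + 2)))ˣ := ZMod.unitOfCoprime 5 (Nat.Coprime.pow_right _ (by norm_num))
  have ha : (a : ZMod (2 ^ (n + 2))) = 5 := by simp [a]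
  have hfour : 4 ∣ 2 ^ (n + 2) := pow_dvd_pow 2 (Nat.le_add_left 2 n)
  have hmod : ZMod.unitsMap hfour a = 1 := by
    ext
    rw [ZMod.unitsMap_def, Units.coe_map, MonoidHom.coe_coe, ha, map_ofNat]
    rfl
  exact ⟨a, generatesUnitsUpToSign_of_index_zpowers_eq_two
    (index_zpowers_eq_two_of_val_eq_five ha)
    (neg_one_notMem_zpowers_of_unitsMap_eq_one hfour hmod)⟩

theorem isPrimitiveRoot_mem_of_pow_mem_of_inv_mem {K : Type*} [Field K] {n q : ℕ} [NeZero n]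
    {a : (ZMod n)ˣ} (ha : GeneratesUnitsUpToSign a) (hq : (q : ZMod n) = a) {S : Set K}
    (hpow : ∀ y ∈ S, y ^ q ∈ S) (hinv : ∀ y ∈ S, y⁻¹ ∈ S) {x y : K} (hx : IsPrimitiveRoot x n)
    (hxS : x ∈ S) (hy : IsPrimitiveRoot y n) : y ∈ S := by
  have hiter (k : ℕ) : x ^ q ^ k ∈ S := by
    induction k with
    | zero => simpa using hxS
    | succ k ih => simpa only [pow_succ, pow_mul] using hpow _ ih
  have hcongr {i j : ℕ} (h : (i : ZMod n) = j) : x ^ i = x ^ j :=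
    pow_eq_pow_of_modEq ((ZMod.natCast_eq_natCast_iff i j n).mp h) hx.pow_eq_one
  obtain ⟨i, -, hi, rfl⟩ := hx.isPrimitiveRoot_iff.mp hy
  obtain ⟨k, hk | hk⟩ := ha (ZMod.unitOfCoprime i hi)
  all_goals
    have hik := congrArg Units.val hk
    simp only [ZMod.coe_unitOfCoprime, Units.val_neg, Units.val_pow_eq_pow_val, ← hq] at hik
  · rw [hcongr (j := q ^ k) (by simpa using hik)]
    exact hiter k
  · have hmul : x ^ i * x ^ q ^ k = 1 := by
      rw [← pow_add, hcongr (j := 0) (by simp [hik]), pow_zero]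
    rw [eq_inv_of_mul_eq_one_left hmul]
    exact hinv _ (hiter k)

end GeneratesUpToSign

section SymplecticSpectrum

variable {l R F K : Type*} [Fintype l] [DecidableEq l] [CommRing R] [Field F] [Field K]

theorem charpoly_coe_inv_symplecticGroup (A : symplecticGroup l R) :
    (↑A⁻¹ : Matrix (l ⊕ l) (l ⊕ l) R).charpoly = (A : Matrix (l ⊕ l) (l ⊕ l) R).charpoly := by
  rw [SymplecticGroup.coe_inv, charpoly_mul_comm, ← Matrix.mul_assoc, Matrix.mul_neg, J_squared,
    neg_neg, Matrix.one_mul, charpoly_transpose]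

theorem inv_mem_spectrum_symplecticGroup (A : symplecticGroup l K) {x : K}
    (hx : x ∈ spectrum K (A : Matrix (l ⊕ l) (l ⊕ l) K)) :
    x⁻¹ ∈ spectrum K (A : Matrix (l ⊕ l) (l ⊕ l) K) := by
  have hinv : x⁻¹ ∈ spectrum K (↑A⁻¹ : Matrix (l ⊕ l) (l ⊕ l) K) := by
    rw [← Set.inv_mem_inv] at hx
    exact (spectrum.map_inv (Units.map (symplecticGroup l K).subtype (toUnits A))).subset hx
  rwa [mem_spectrum_iff_isRoot_charpoly, charpoly_coe_inv_symplecticGroup,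
    ← mem_spectrum_iff_isRoot_charpoly] at hinv

theorem totient_le_of_orderOf_symplecticGroup_eq [Fintype F] {p k : ℕ} (hp : p.Prime)
    [NeZero (p : F)] {a : (ZMod (p ^ (k + 1)))ˣ} (ha : GeneratesUnitsUpToSign a)
    (hF : (Fintype.card F : ZMod (p ^ (k + 1))) = a) {M : symplecticGroup l F}
    (hM : orderOf M = p ^ (k + 1)) : (p ^ (k + 1)).totient ≤ 2 * Fintype.card l := by
  let K := AlgebraicClosure F
  have : NeZero (p ^ (k + 1)) := ⟨pow_ne_zero _ hp.ne_zero⟩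
  have : NeZero (p : K) := NeZero.nat_of_injective (algebraMap F K).injective
  let A : symplecticGroup l K := ⟨_, SymplecticGroup.map_mem M.2 (algebraMap F K)⟩
  have hA : orderOf (A : Matrix (l ⊕ l) (l ⊕ l) K) = p ^ (k + 1) := by
    rw [← hM, ← orderOf_submonoid M]
    exact orderOf_map_algebraMap _
  obtain ⟨x, hxA, hx⟩ := exists_isPrimitiveRoot_mem_spectrum (K := K) hp hA
  let χ := (M : Matrix (l ⊕ l) (l ⊕ l) F).charpoly
  have hroots (y : K) (hy : IsPrimitiveRoot y (p ^ (k + 1))) : aeval y χ = 0 := by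
    refine isPrimitiveRoot_mem_of_pow_mem_of_inv_mem ha hF (S := {y | aeval y χ = 0})
      (fun _ ↦ aeval_pow_card_eq_zero) (fun y hy ↦ ?_) hx
      (mem_spectrum_map_iff_aeval_charpoly.mp hxA) hy
    exact mem_spectrum_map_iff_aeval_charpoly.mp
      (inv_mem_spectrum_symplecticGroup A (mem_spectrum_map_iff_aeval_charpoly.mpr hy))
  calc
    (p ^ (k + 1)).totient ≤ χ.natDegree :=
      totient_le_natDegree_of_aeval_eq_zero (charpoly_monic _).ne_zero hx hroots
    _ = 2 * Fintype.card l := by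
      rw [charpoly_natDegree_eq_dim, Fintype.card_sum, two_mul]

end SymplecticSpectrum

section Admissible

theorem neZero_natCast_zmod_of_prime_ne {p q : ℕ} (hp : p.Prime) (hq : q.Prime) (h : q ≠ p) :
    NeZero (q : ZMod p) :=
  ⟨fun h0 ↦ h ((Nat.prime_dvd_prime_iff_eq hp hq).mp ((ZMod.natCast_eq_zero_iff q p).mp h0)).symm⟩

variable {g n p k : ℕ}

theorem totient_le_of_prime_pow_dvd_of_mem_admissibleForG (hn : n ∈ AdmissibleForG g)
    (hp : p.Prime) (hdvd : p ^ (k + 1) ∣ n) : (p ^ (k + 1)).totient ≤ 2 * g := by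
  obtain ⟨hn0, p₀, -, -, hord⟩ := hn
  have : NeZero (p ^ (k + 1)) := ⟨pow_ne_zero _ hp.ne_zero⟩
  obtain ⟨a, ha⟩ := exists_generatesUnitsUpToSign_zmod_prime_pow hp (k + 1)
  obtain ⟨q, hq_gt, hq, hqa⟩ := Nat.forall_exists_prime_gt_and_eq_mod a.isUnit (2 + p₀ + p)
  have : Fact q.Prime := ⟨hq⟩
  have : NeZero (p : ZMod q) := neZero_natCast_zmod_of_prime_ne hq hp (by lia)
  obtain ⟨M, rfl⟩ := hord q hq (by lia) (by lia)
  simpa using totient_le_of_orderOf_symplecticGroup_eq hp ha (by rwa [ZMod.card])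
    (orderOf_pow_orderOf_div hn0.ne' hdvd)

theorem prime_pow_mem_admissibleForG (hp : p.Prime) (h : (p ^ k).totient ≤ 2 * g) :
    p ^ k ∈ AdmissibleForG g := by
  have hord (q : ℕ) (hq : q.Prime) (hpq : p ≠ q) :
      ∃ M : symplecticGroup (Fin g) (ZMod q), orderOf M = p ^ k := by
    have : Fact q.Prime := ⟨hq⟩
    have := neZero_natCast_zmod_of_prime_ne hq hp hpq
    have : NeZero ((p ^ k : ℕ) : ZMod q) := ⟨by
      simpa only [Nat.cast_pow] using pow_ne_zero k (NeZero.ne (p : ZMod q))⟩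
    exact exists_orderOf_symplecticGroup_eq (by rwa [Fintype.card_fin])
  refine ⟨pow_pos hp.pos k, ?_⟩
  obtain rfl | hp2 := eq_or_ne p 2
  · exact ⟨3, Nat.prime_three, by simp, fun q hq hq2 _ ↦ hord q hq hq2.symm⟩
  · exact ⟨p, hp, hp2, fun q hq _ hqp ↦ hord q hq hqp.symm⟩

end Admissible

/-- The set of integers admissible for `g` is finite, and its least common multiple `c_g`
equals the product `∏ p^k` over all prime powers `p^k` with
`(p-1)p^{k-1} ≤ 2g < (p-1)p^k`. -/
theorem stmt11 (g : ℕ) (hg : 1 ≤ g) :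
    ∃ hfin : (AdmissibleForG g).Finite,
      hfin.toFinset.lcm id =
        ∏ᶠ n ∈ {n : ℕ | ∃ p k : ℕ, p.Prime ∧ 1 ≤ k ∧ n = p ^ k ∧
            (p - 1) * p ^ (k - 1) ≤ 2 * g ∧ 2 * g < (p - 1) * p ^ k}, n := by
  rw [setOf_prime_pow_eq_maximalPrimePowersOfTotientLE]
  exact exists_finite_lcm_eq_finprod_maximalPrimePowersOfTotientLE
    (fun _ hn _ _ ↦ totient_le_of_prime_pow_dvd_of_mem_admissibleForG hn)
    (fun _ _ ↦ prime_pow_mem_admissibleForG)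
end
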